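/- Assume h(t,x,·) is convex on ℝ^m for every (t,x), and that the optimal control problem admits an optimal admissible pair (x*,u*), unique up to equality for Lebesgue-a.e. t. Let (η*, η_T*) be an optimal solution to (Q) with disintegration dη*(t,x,u) = dν*(u|t,x) dη̄*(t,x), where η̄* is the (t,x)-marginal of η* and ν*(·|t,x) is a stochastic kernel on U. Then for η̄*-a.e. (t,x): F(t,x,u*(t)) = ∫_U F(t,x,u) dν*(u|t,x). If moreover every column of g(t, x*(t)) is nonzero for Lebesgue-a.e. t ∈ [0,T], then u*(t) = ∫_U u dν*(u|t,x) for η̄*-a.e. (t,x). -/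

import Mathlib

open MeasureTheory Set ProbabilityTheory

noncomputable section

/-- The input constraint set `U = [-1,1]^m`. -/
def Ubox (m : ℕ) : Set (Fin m → ℝ) := Set.Icc (fun _ => (-1 : ℝ)) (fun _ => (1 : ℝ))

/-- The controlled vector field `F(t,x,u) = f(t,x) + g(t,x) u`. -/
def Fvec {n m : ℕ} (f : ℝ × (Fin n → ℝ) → Fin n → ℝ)
    (g : ℝ × (Fin n → ℝ) → Fin n → Fin m → ℝ)
    (z : ℝ × (Fin n → ℝ) × (Fin m → ℝ)) : Fin n → ℝ :=
  fun k => f (z.1, z.2.1) k + ∑ j, g (z.1, z.2.1) k j * z.2.2 j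

/-- `(L_F v)(t,x,u) = ∂v/∂t + Σ_k (∂v/∂x_k)·[F(t,x,u)]_k`. -/
def LFop {n m : ℕ} (f : ℝ × (Fin n → ℝ) → Fin n → ℝ)
    (g : ℝ × (Fin n → ℝ) → Fin n → Fin m → ℝ)
    (v : ℝ × (Fin n → ℝ) → ℝ) (z : ℝ × (Fin n → ℝ) × (Fin m → ℝ)) : ℝ :=
  fderiv ℝ v (z.1, z.2.1) ((1 : ℝ), (0 : Fin n → ℝ)) +
    ∑ k, fderiv ℝ v (z.1, z.2.1) ((0 : ℝ), Pi.single k (1 : ℝ)) * Fvec f g z k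

/-- Liouville's equation for a pair of measures `(η, ηT)` with initial point `x₀`. -/
def SatisfiesLiouville {n m : ℕ} (T : ℝ) (x₀ : Fin n → ℝ)
    (f : ℝ × (Fin n → ℝ) → Fin n → ℝ) (g : ℝ × (Fin n → ℝ) → Fin n → Fin m → ℝ)
    (η : Measure (ℝ × (Fin n → ℝ) × (Fin m → ℝ))) (ηT : Measure (Fin n → ℝ)) : Prop :=
  ∀ v : ℝ × (Fin n → ℝ) → ℝ, ContDiff ℝ 1 v →
    v (0, x₀) + ∫ z, LFop f g v z ∂η = ∫ y, v (T, y) ∂ηT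

/-- An admissible pair: a Borel measurable control `u` with values in `U` and an
absolutely continuous trajectory `x` with `x(0) = x₀`, `x(T) ∈ X_T`, `x(t) ∈ X` on `[0,T]`
and `ẋ = F(t,x,u)` a.e. (encoded in integral form). -/
def IsAdmissiblePair {n m : ℕ} (T : ℝ) (X XT : Set (Fin n → ℝ)) (x₀ : Fin n → ℝ)
    (f : ℝ × (Fin n → ℝ) → Fin n → ℝ) (g : ℝ × (Fin n → ℝ) → Fin n → Fin m → ℝ)
    (x : ℝ → Fin n → ℝ) (u : ℝ → Fin m → ℝ) : Prop :=
  Measurable u ∧ (∀ t ∈ Set.Icc (0 : ℝ) T, u t ∈ Ubox m) ∧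
  x 0 = x₀ ∧ x T ∈ XT ∧ (∀ t ∈ Set.Icc (0 : ℝ) T, x t ∈ X) ∧
  IntegrableOn (fun s => Fvec f g (s, x s, u s)) (Set.Icc (0 : ℝ) T) volume ∧
  ∀ t ∈ Set.Icc (0 : ℝ) T, x t = x₀ + ∫ s in Set.Icc (0 : ℝ) t, Fvec f g (s, x s, u s)

/-- The cost `J(x,u) = ∫₀^T h(t,x(t),u(t)) dt + H(x(T))` of an admissible pair. -/
def Jcost {n m : ℕ} (T : ℝ) (h : ℝ × (Fin n → ℝ) × (Fin m → ℝ) → ℝ)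
    (H : (Fin n → ℝ) → ℝ) (x : ℝ → Fin n → ℝ) (u : ℝ → Fin m → ℝ) : ℝ :=
  (∫ t in Set.Icc (0 : ℝ) T, h (t, x t, u t)) + H (x T)

/-- The set of costs of admissible pairs; its infimum is `J*`. -/
def JVals {n m : ℕ} (T : ℝ) (X XT : Set (Fin n → ℝ)) (x₀ : Fin n → ℝ)
    (f : ℝ × (Fin n → ℝ) → Fin n → ℝ) (g : ℝ × (Fin n → ℝ) → Fin n → Fin m → ℝ)
    (h : ℝ × (Fin n → ℝ) × (Fin m → ℝ) → ℝ) (H : (Fin n → ℝ) → ℝ) : Set ℝ :=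
  {c | ∃ (x : ℝ → Fin n → ℝ) (u : ℝ → Fin m → ℝ),
    IsAdmissiblePair T X XT x₀ f g x u ∧ c = Jcost T h H x u}

/-- Feasibility for problem `(Q)`. -/
def QFeasible {n m : ℕ} (T : ℝ) (X XT : Set (Fin n → ℝ)) (x₀ : Fin n → ℝ)
    (f : ℝ × (Fin n → ℝ) → Fin n → ℝ) (g : ℝ × (Fin n → ℝ) → Fin n → Fin m → ℝ)
    (η : Measure (ℝ × (Fin n → ℝ) × (Fin m → ℝ))) (ηT : Measure (Fin n → ℝ)) : Prop :=
  IsFiniteMeasure η ∧ IsFiniteMeasure ηT ∧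
  η ((Set.Icc (0 : ℝ) T ×ˢ X ×ˢ Ubox m)ᶜ) = 0 ∧ ηT (XTᶜ) = 0 ∧
  SatisfiesLiouville T x₀ f g η ηT

/-- The cost `⟨η,h⟩ + ⟨η_T,H⟩` of a pair of measures. -/
def Qcost {n m : ℕ} (h : ℝ × (Fin n → ℝ) × (Fin m → ℝ) → ℝ) (H : (Fin n → ℝ) → ℝ)
    (η : Measure (ℝ × (Fin n → ℝ) × (Fin m → ℝ))) (ηT : Measure (Fin n → ℝ)) : ℝ :=
  ∫ z, h z ∂η + ∫ y, H y ∂ηT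

/-- The set of costs of feasible points of `(Q)`; its infimum is `q*`. -/
def QVals {n m : ℕ} (T : ℝ) (X XT : Set (Fin n → ℝ)) (x₀ : Fin n → ℝ)
    (f : ℝ × (Fin n → ℝ) → Fin n → ℝ) (g : ℝ × (Fin n → ℝ) → Fin n → Fin m → ℝ)
    (h : ℝ × (Fin n → ℝ) × (Fin m → ℝ) → ℝ) (H : (Fin n → ℝ) → ℝ) : Set ℝ :=
  {c | ∃ (η : Measure (ℝ × (Fin n → ℝ) × (Fin m → ℝ))) (ηT : Measure (Fin n → ℝ)),
    QFeasible T X XT x₀ f g η ηT ∧ c = Qcost h H η ηT}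

open scoped Topology Convolution in
lemma mollify_subsol {E : Type*} [NormedAddCommGroup E] [NormedSpace ℝ E] [FiniteDimensional ℝ E]
    [MeasurableSpace E] [BorelSpace E] (μ : Measure E) [μ.IsAddHaarMeasure] {A : Type*}
    (Us : Set A) (G : E → A → E) (ℓ : E → A → ℝ) (V : E → ℝ) (δ : ℝ) (hδ : 0 < δ)
    (hVm : LocallyIntegrable V μ)
    (hV : ∀ z e u τ, ‖e‖ ≤ δ → 0 < τ → τ ≤ δ → u ∈ Us →
      V z ≤ τ * ℓ (z + e) u + V (z + τ • G (z + e) u)) :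
    ∃ v : E → ℝ, ContDiff ℝ 1 v ∧
      (∀ z, ∀ u ∈ Us, 0 ≤ fderiv ℝ v z (G z u) + ℓ z u) ∧
      (∀ z C, (∀ y, ‖y‖ ≤ δ → V (z + y) ≤ C) → v z ≤ C) ∧
      (∀ z C, (∀ y, ‖y‖ ≤ δ → C ≤ V (z + y)) → C ≤ v z) := by
  let ρ : ContDiffBump (0 : E) := ⟨δ / 2, δ, by positivity, by linarith⟩
  set k : E → ℝ := ρ.normed μ with hk
  have hkc : HasCompactSupport k := ρ.hasCompactSupport_normed
  have hk0 : ∀ y, 0 ≤ k y := fun y => ρ.nonneg_normed y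
  have hks : ∀ y, ¬ ‖y‖ ≤ δ → k y = 0 := by
    intro y hy
    have : y ∉ Function.support k := by
      rw [hk, ρ.support_normed_eq]
      simp only [Metric.mem_ball, dist_zero_right]
      intro h; exact hy h.le
    simpa using this
  have hk1 : ∫ y, k y ∂μ = 1 := ρ.integral_normed
  have hkcont : ContDiff ℝ 1 k := ρ.contDiff_normed
  have hIntg : ∀ z, Integrable (fun y => k y * V (z - y)) μ := by
    intro z
    exact (HasCompactSupport.convolutionExists_left (ContinuousLinearMap.lsmul ℝ ℝ) hkc
      hkcont.continuous hVm z)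
  have hkint : Integrable k μ := ρ.integrable_normed
  set v : E → ℝ := fun z => ∫ y, k y * V (z - y) ∂μ with hv
  have hvC : ContDiff ℝ 1 v := by
    have := HasCompactSupport.contDiff_convolution_left (n := 1) (ContinuousLinearMap.lsmul ℝ ℝ) hkc
      (by exact_mod_cast hkcont) hVm
    exact_mod_cast this
  refine ⟨v, hvC, ?_, ?_, ?_⟩
  · intro z u hu
    have step : ∀ τ, 0 < τ → τ ≤ δ → v z ≤ τ * ℓ z u + v (z + τ • G z u) := by
      intro τ h0 h1
      have : v z ≤ ∫ y, (τ * ℓ z u * k y + k y * V (z + τ • G z u - y)) ∂μ := by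
        apply integral_mono (hIntg z) ((hkint.const_mul _).add (hIntg _))
        intro y
        by_cases hy : ‖y‖ ≤ δ
        · have := hV (z - y) y u τ hy h0 h1 hu
          simp only [sub_add_cancel] at this
          have e : z + τ • G z u - y = z - y + τ • G z u := by abel
          simp only [Pi.add_apply, e]
          nlinarith [hk0 y]
        · simp [hks y hy]
      rw [integral_add (hkint.const_mul _) (hIntg _), integral_const_mul, hk1, mul_one] at this
      exact this
    have hd : HasDerivAt (fun τ : ℝ => v (z + τ • G z u)) (fderiv ℝ v z (G z u)) 0 := by
      have h1 : HasFDerivAt v (fderiv ℝ v z) (z + (0 : ℝ) • G z u) := by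
        simpa using (hvC.differentiable (by norm_num) z).hasFDerivAt
      have h2 : HasDerivAt (fun τ : ℝ => z + τ • G z u) (G z u) 0 := by
        simpa using ((hasDerivAt_id (0 : ℝ)).smul_const (G z u)).const_add z
      exact h1.comp_hasDerivAt 0 h2
    have ht := hd.tendsto_slope_zero_right
    have : -ℓ z u ≤ fderiv ℝ v z (G z u) := by
      refine ge_of_tendsto ht ?_
      filter_upwards [Ioc_mem_nhdsGT hδ] with τ hτ
      have := step τ hτ.1 hτ.2
      simp only [zero_add, zero_smul, add_zero, smul_eq_mul]
      rw [inv_mul_eq_div, le_div_iff₀ hτ.1]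
      linarith
    linarith
  · intro z C hC
    calc v z ≤ ∫ y, C * k y ∂μ := by
          apply integral_mono (hIntg z) (hkint.const_mul _)
          intro y
          by_cases hy : ‖y‖ ≤ δ
          · have := hC (-y) (by simpa using hy)
            rw [← sub_eq_add_neg] at this
            simp only
            nlinarith [hk0 y]
          · simp [hks y hy]
      _ = C := by rw [integral_const_mul, hk1, mul_one]
  · intro z C hC
    calc C = ∫ y, C * k y ∂μ := by rw [integral_const_mul, hk1, mul_one]
      _ ≤ v z := by
          apply integral_mono (hkint.const_mul _) (hIntg z)
          intro y
          by_cases hy : ‖y‖ ≤ δ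
          · have := hC (-y) (by simpa using hy)
            rw [← sub_eq_add_neg] at this
            simp only
            nlinarith [hk0 y]
          · simp [hks y hy]

/-- Cost of a finite polygonal path given by a list of steps `(τ, e, u)`. -/
def listCost {E A : Type*} [NormedAddCommGroup E] [NormedSpace ℝ E] (G : E → A → E)
    (ℓ : E → A → ℝ) (Φ : E → ℝ) : List (ℝ × E × A) → E → ℝ
  | [], z => Φ z
  | (τ, e, u) :: l, z => τ * ℓ (z + e) u + listCost G ℓ Φ l (z + τ • G (z + e) u)

/-- Valid list of steps. -/
def validSteps {E A : Type*} [NormedAddCommGroup E] (Us : Set A) (δ : ℝ)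
    (l : List (ℝ × E × A)) : Prop :=
  ∀ s ∈ l, 0 < s.1 ∧ s.1 ≤ δ ∧ ‖s.2.1‖ ≤ δ ∧ s.2.2 ∈ Us

lemma listCost_continuous {E A : Type*} [NormedAddCommGroup E] [NormedSpace ℝ E] (Us : Set A)
    (δ : ℝ) (G : E → A → E)
    (ℓ : E → A → ℝ) (Φ : E → ℝ) (hG : ∀ u ∈ Us, Continuous (fun z => G z u))
    (hℓ : ∀ u ∈ Us, Continuous (fun z => ℓ z u)) (hΦ : Continuous Φ)
    (l : List (ℝ × E × A)) (hl : validSteps Us δ l) : Continuous (listCost G ℓ Φ l) := by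
  induction l with
  | nil => exact hΦ
  | cons s l ih =>
    obtain ⟨τ, e, u⟩ := s
    have hu : u ∈ Us := (hl _ (List.mem_cons_self)).2.2.2
    have ih' := ih (fun s hs => hl s (List.mem_cons_of_mem _ hs))
    have h1 : Continuous (fun z => G (z + e) u) := (hG u hu).comp (continuous_add_const e)
    have h2 : Continuous (fun z => ℓ (z + e) u) := (hℓ u hu).comp (continuous_add_const e)
    exact (h2.const_mul τ).add (ih'.comp (continuous_id.add (h1.const_smul τ)))

/-- Existence of a smooth subsolution and almost optimal polygonal paths. -/
lemma exists_smooth_subsol {E A : Type*} [NormedAddCommGroup E] [NormedSpace ℝ E]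
    [FiniteDimensional ℝ E]
    [MeasurableSpace E] [BorelSpace E] (μ : Measure E) [μ.IsAddHaarMeasure]
    (Us : Set A) (G : E → A → E) (ℓ : E → A → ℝ) (Φ : E → ℝ) (δ : ℝ) (hδ : 0 < δ)
    (hG : ∀ u ∈ Us, Continuous (fun z => G z u))
    (hℓ : ∀ u ∈ Us, Continuous (fun z => ℓ z u)) (hΦ : Continuous Φ)
    (θ : E → ℝ) (hθ : Continuous θ) (hθΦ : ∀ z, θ z ≤ Φ z)
    (hθs : ∀ z e u τ, 0 < τ → u ∈ Us → θ z ≤ τ * ℓ (z + e) u + θ (z + τ • G (z + e) u)) :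
    ∃ v : E → ℝ, ContDiff ℝ 1 v ∧
      (∀ z, ∀ u ∈ Us, 0 ≤ fderiv ℝ v z (G z u) + ℓ z u) ∧
      (∀ z C, (∀ y, ‖y‖ ≤ δ → Φ (z + y) ≤ C) → v z ≤ C) ∧
      (∀ z C, v z < C → ∃ y, ‖y‖ ≤ δ ∧ ∃ l, validSteps Us δ l ∧ listCost G ℓ Φ l (z + y) < C) := by
  have hlow : ∀ l : List (ℝ × E × A), validSteps Us δ l → ∀ z, θ z ≤ listCost G ℓ Φ l z := by
    intro l
    induction l with
    | nil => intro _ z; exact hθΦ z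
    | cons s l ih =>
      obtain ⟨τ, e, u⟩ := s
      intro hl z
      have h1 := hl _ (List.mem_cons_self)
      have := ih (fun s hs => hl s (List.mem_cons_of_mem _ hs)) (z + τ • G (z + e) u)
      have h2 := hθs z e u τ h1.1 h1.2.2.2
      simp only [listCost]
      linarith
  let I := {l : List (ℝ × E × A) // validSteps Us δ l}
  have : Nonempty I := ⟨⟨[], by intro s hs; simp at hs⟩⟩
  let V : E → ℝ := fun z => ⨅ l : I, listCost G ℓ Φ l.1 z
  have hbdd : ∀ z, BddBelow (range fun l : I => listCost G ℓ Φ l.1 z) := by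
    intro z
    refine ⟨θ z, ?_⟩
    rintro _ ⟨l, rfl⟩
    exact hlow l.1 l.2 z
  have hθV : ∀ z, θ z ≤ V z := fun z => le_ciInf fun l => hlow l.1 l.2 z
  have hVΦ : ∀ z, V z ≤ Φ z := fun z => ciInf_le (hbdd z) (⟨[], by intro s hs; simp at hs⟩ : I)
  have husc : UpperSemicontinuous V := upperSemicontinuous_ciInf hbdd
    (fun l => (listCost_continuous Us δ G ℓ Φ hG hℓ hΦ l.1 l.2).upperSemicontinuous)
  have hVm : Measurable V := husc.measurable
  have hLI : LocallyIntegrable V μ := by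
    have hb : Continuous (fun z => |θ z| + |Φ z|) := hθ.abs.add hΦ.abs
    refine (hb.locallyIntegrable (μ := μ)).mono hVm.aestronglyMeasurable ?_
    refine Filter.Eventually.of_forall fun z => ?_
    rw [Real.norm_eq_abs, Real.norm_of_nonneg (by positivity), abs_le]
    constructor
    · have := hθV z; have := neg_abs_le (θ z); have := abs_nonneg (Φ z); linarith
    · have := hVΦ z; have := le_abs_self (Φ z); have := abs_nonneg (θ z); linarith
  have hVs : ∀ z e u τ, ‖e‖ ≤ δ → 0 < τ → τ ≤ δ → u ∈ Us →
      V z ≤ τ * ℓ (z + e) u + V (z + τ • G (z + e) u) := by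
    intro z e u τ he h0 h1 hu
    have : V z - τ * ℓ (z + e) u ≤ V (z + τ • G (z + e) u) := by
      refine le_ciInf fun l => ?_
      have hv : validSteps Us δ ((τ, e, u) :: l.1) := by
        intro s hs
        rcases List.mem_cons.1 hs with rfl | hs
        · exact ⟨h0, h1, he, hu⟩
        · exact l.2 s hs
      have : V z ≤ listCost G ℓ Φ ((τ, e, u) :: l.1) z :=
        ciInf_le (hbdd z) (⟨(τ, e, u) :: l.1, hv⟩ : I)
      simp only [listCost] at this
      linarith
    linarith
  obtain ⟨v, h1, h2, h3, h4⟩ := mollify_subsol μ Us G ℓ V δ hδ hLI hVs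
  refine ⟨v, h1, h2, fun z C h => h3 z C fun y hy => (hVΦ _).trans (h y hy), ?_⟩
  intro z C hC
  by_contra hcon
  push Not at hcon
  have := h4 z C (fun y hy => le_ciInf fun l => hcon y hy l.1 l.2)
  linarith

lemma intervalIntegrable_of_bdd {F : Type*} [NormedAddCommGroup F] [NormedSpace ℝ F]
    [SecondCountableTopology F] [MeasurableSpace F] [BorelSpace F]
    {q : ℝ → F} (hm : Measurable q) {C : ℝ} (hb : ∀ s, ‖q s‖ ≤ C) (a b : ℝ) :
    IntervalIntegrable q volume a b := by
  refine (intervalIntegrable_const (c := C) (μ := volume) (a := a) (b := b)).mono_fun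
    hm.aestronglyMeasurable ?_
  refine Filter.Eventually.of_forall fun s => ?_
  exact (hb s).trans (le_abs_self C)

lemma norm_smul_sub_integral_le {F : Type*} [NormedAddCommGroup F] [NormedSpace ℝ F]
    [CompleteSpace F] (q : ℝ → F) (c : F) (t τ ε : ℝ) (hτ : 0 ≤ τ)
    (hq : IntervalIntegrable q volume t (t + τ))
    (h : ∀ r ∈ Icc t (t + τ), ‖q r - c‖ ≤ ε) :
    ‖τ • c - ∫ r in t..(t + τ), q r‖ ≤ ε * τ := by
  have e : τ • c - ∫ r in t..(t + τ), q r = - ∫ r in t..(t + τ), (q r - c) := by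
    rw [intervalIntegral.integral_sub hq intervalIntegrable_const]
    simp
  rw [e, norm_neg]
  have := intervalIntegral.norm_integral_le_of_norm_le_const (a := t) (b := t + τ) (C := ε)
    (f := fun r => q r - c) (by
      intro r hr
      rw [uIoc_of_le (by linarith)] at hr
      exact h r ⟨hr.1.le, hr.2⟩)
  simpa [abs_of_nonneg hτ] using this

lemma zero_mem_Ubox (m : ℕ) : (0 : Fin m → ℝ) ∈ Ubox m := by
  constructor <;> intro i <;> simp

lemma list_to_traj {n m : ℕ} (Gx : ℝ × (Fin n → ℝ) → (Fin m → ℝ) → (Fin n → ℝ))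
    (ℓ : ℝ × (Fin n → ℝ) → (Fin m → ℝ) → ℝ) (Φ : ℝ × (Fin n → ℝ) → ℝ) (δ ε M B : ℝ)
    (hδ : 0 < δ) (hε : 0 ≤ ε) (hM : 0 ≤ M)
    (hGc : Continuous (fun p : (ℝ × (Fin n → ℝ)) × (Fin m → ℝ) => Gx p.1 p.2))
    (hℓc : Continuous (fun p : (ℝ × (Fin n → ℝ)) × (Fin m → ℝ) => ℓ p.1 p.2))
    (hGM : ∀ z u, ‖Gx z u‖ ≤ M) (hℓB : ∀ z u, ‖ℓ z u‖ ≤ B)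
    (hmodG : ∀ z z' u, ‖z - z'‖ ≤ 2 * δ → ‖Gx z u - Gx z' u‖ ≤ ε)
    (hmodℓ : ∀ z z' u, ‖z - z'‖ ≤ 2 * δ → ‖ℓ z u - ℓ z' u‖ ≤ ε)
    (l : List (ℝ × (ℝ × (Fin n → ℝ)) × (Fin m → ℝ))) (hl : validSteps (Ubox m) δ l) :
    ∀ t x, ∃ (t' : ℝ) (y : ℝ → Fin n → ℝ) (w : ℝ → Fin m → ℝ), t ≤ t' ∧ Measurable y ∧
      Measurable w ∧ (∀ s, w s ∈ Ubox m) ∧ (∀ s < t, y s = x) ∧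
      (∀ s ≥ t, ‖y s - x - ∫ r in t..s, Gx (r, y r) (w r)‖
        ≤ ε * (s - t) + M * δ + M * max (s - t') 0) ∧
      (∫ r in t..t', ℓ (r, y r) (w r)) + Φ (t', y t')
        ≤ listCost (fun z u => ((1 : ℝ), Gx z u)) ℓ Φ l (t, x) + ε * (t' - t) := by
  have hmeasG : ∀ (y : ℝ → Fin n → ℝ) (w : ℝ → Fin m → ℝ), Measurable y → Measurable w →
      Measurable (fun r => Gx (r, y r) (w r)) := by
    intro y w hy hw
    exact hGc.measurable.comp ((measurable_id.prodMk hy).prodMk hw)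
  have hmeasℓ : ∀ (y : ℝ → Fin n → ℝ) (w : ℝ → Fin m → ℝ), Measurable y → Measurable w →
      Measurable (fun r => ℓ (r, y r) (w r)) := by
    intro y w hy hw
    exact hℓc.measurable.comp ((measurable_id.prodMk hy).prodMk hw)
  induction l with
  | nil =>
    intro t x
    refine ⟨t, fun _ => x, fun _ => 0, le_rfl, measurable_const, measurable_const,
      fun _ => zero_mem_Ubox m, fun _ _ => rfl, ?_, ?_⟩
    · intro s hs
      have := intervalIntegral.norm_integral_le_of_norm_le_const (a := t) (b := s) (C := M)
        (f := fun r => Gx (r, x) 0) (fun r _ => hGM _ _)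
      rw [abs_of_nonneg (by linarith)] at this
      rw [sub_self, zero_sub, norm_neg, max_eq_left (by linarith)]
      have h1 : 0 ≤ ε * (s - t) := mul_nonneg hε (by linarith)
      have h2 : 0 ≤ M * δ := by positivity
      linarith
    · simp [listCost]
  | cons a l ih =>
    obtain ⟨τ, e, u0⟩ := a
    intro t x
    obtain ⟨hτ0, hτδ, heδ, hu0⟩ := hl _ List.mem_cons_self
    simp only at hτ0 hτδ heδ hu0
    set v := Gx ((t, x) + e) u0 with hv
    obtain ⟨t', y1, w1, ht', hy1, hw1, hwU, hyt, hres, hcost⟩ :=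
      ih (fun s hs => hl s (List.mem_cons_of_mem _ hs)) (t + τ) (x + τ • v)
    set y : ℝ → Fin n → ℝ := fun s => if s < t + τ then x else y1 s with hy
    set w : ℝ → Fin m → ℝ := fun s => if s < t + τ then u0 else w1 s with hw
    have hym : Measurable y := Measurable.ite measurableSet_Iio measurable_const hy1
    have hwm : Measurable w := Measurable.ite measurableSet_Iio measurable_const hw1
    have hclose : ∀ r ∈ Icc t (t + τ), ‖((r, x) : ℝ × (Fin n → ℝ)) - ((t, x) + e)‖ ≤ 2 * δ := by
      intro r hr
      have e1 : ((r, x) : ℝ × (Fin n → ℝ)) - ((t, x) + e) = (r - t, 0) - e := by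
        ext <;> simp <;> ring
      rw [e1]
      have h1 : ‖((r - t, 0) : ℝ × (Fin n → ℝ))‖ ≤ δ := by
        rw [Prod.norm_mk, norm_zero, Real.norm_eq_abs, abs_of_nonneg (by linarith [hr.1])]
        exact max_le (by linarith [hr.2]) hδ.le
      calc _ ≤ ‖((r - t, 0) : ℝ × (Fin n → ℝ))‖ + ‖e‖ := norm_sub_le _ _
        _ ≤ 2 * δ := by linarith
    have hG1 : ‖τ • v - ∫ r in t..(t + τ), Gx (r, y r) (w r)‖ ≤ ε * τ := by
      have : ∫ r in t..(t + τ), Gx (r, y r) (w r) = ∫ r in t..(t + τ), Gx (r, x) u0 := by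
        apply intervalIntegral.integral_congr_Ioo_of_le (by linarith)
        intro r hr
        simp [hy, hw, hr.2]
      rw [this]
      refine norm_smul_sub_integral_le _ _ _ _ _ hτ0.le
        (intervalIntegrable_of_bdd (hmeasG (fun _ => x) (fun _ => u0) measurable_const
          measurable_const) (fun s => hGM _ _) _ _) ?_
      intro r hr
      exact hmodG _ _ _ (hclose r hr)
    have hℓ1 : ‖τ • ℓ ((t, x) + e) u0 - ∫ r in t..(t + τ), ℓ (r, y r) (w r)‖ ≤ ε * τ := by
      have : ∫ r in t..(t + τ), ℓ (r, y r) (w r) = ∫ r in t..(t + τ), ℓ (r, x) u0 := by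
        apply intervalIntegral.integral_congr_Ioo_of_le (by linarith)
        intro r hr
        simp [hy, hw, hr.2]
      rw [this]
      refine norm_smul_sub_integral_le _ _ _ _ _ hτ0.le
        (intervalIntegrable_of_bdd (hmeasℓ (fun _ => x) (fun _ => u0) measurable_const
          measurable_const) (fun s => hℓB _ _) _ _) ?_
      intro r hr
      exact hmodℓ _ _ _ (hclose r hr)
    have hiG : ∀ a b, IntervalIntegrable (fun r => Gx (r, y r) (w r)) volume a b :=
      intervalIntegrable_of_bdd (hmeasG y w hym hwm) (fun s => hGM _ _)
    have hiℓ : ∀ a b, IntervalIntegrable (fun r => ℓ (r, y r) (w r)) volume a b :=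
      intervalIntegrable_of_bdd (hmeasℓ y w hym hwm) (fun s => hℓB _ _)
    refine ⟨t', y, w, by linarith, hym, hwm, ?_, ?_, ?_, ?_⟩
    · intro s
      simp only [hw]
      split_ifs
      · exact hu0
      · exact hwU s
    · intro s hs
      have : s < t + τ := by linarith
      simp [hy, this]
    · intro s hs
      by_cases hst : s < t + τ
      · have h0 : y s = x := by simp [hy, hst]
        have := intervalIntegral.norm_integral_le_of_norm_le_const (a := t) (b := s) (C := M)
          (f := fun r => Gx (r, y r) (w r)) (fun r _ => hGM _ _)
        rw [abs_of_nonneg (by linarith)] at this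
        rw [h0, sub_self, zero_sub, norm_neg]
        have h1 : 0 ≤ ε * (s - t) := mul_nonneg hε (by linarith)
        have h2 : M * (s - t) ≤ M * δ := mul_le_mul_of_nonneg_left (by linarith) hM
        have h3 : 0 ≤ M * max (s - t') 0 := mul_nonneg hM (le_max_right _ _)
        linarith
      · push Not at hst
        have h0 : y s = y1 s := by simp [hy, not_lt.2 hst]
        have h1 := hres s hst
        have e2 : ∫ r in (t + τ)..s, Gx (r, y1 r) (w1 r) = ∫ r in (t + τ)..s, Gx (r, y r) (w r) := by
          apply intervalIntegral.integral_congr_Ioo_of_le hst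
          intro r hr
          simp [hy, hw, not_lt.2 hr.1.le]
        have e3 := intervalIntegral.integral_add_adjacent_intervals (hiG t (t + τ)) (hiG (t + τ) s)
        rw [e2] at h1
        rw [h0, ← e3]
        have e4 : y1 s - x - (∫ r in t..(t + τ), Gx (r, y r) (w r)) - (∫ r in (t + τ)..s, Gx (r, y r) (w r))
          = (y1 s - (x + τ • v) - ∫ r in (t + τ)..s, Gx (r, y r) (w r))
            + (τ • v - ∫ r in t..(t + τ), Gx (r, y r) (w r)) := by abel
        rw [← sub_sub, e4]
        refine (norm_add_le _ _).trans ?_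
        nlinarith
    · have h0 : y t' = y1 t' := by simp [hy, not_lt.2 ht']
      have e2 : ∫ r in (t + τ)..t', ℓ (r, y1 r) (w1 r) = ∫ r in (t + τ)..t', ℓ (r, y r) (w r) := by
        apply intervalIntegral.integral_congr_Ioo_of_le ht'
        intro r hr
        simp [hy, hw, not_lt.2 hr.1.le]
      have e3 := intervalIntegral.integral_add_adjacent_intervals (hiℓ t (t + τ)) (hiℓ (t + τ) t')
      rw [e2] at hcost
      rw [h0, ← e3]
      rw [Real.norm_eq_abs, abs_le, smul_eq_mul] at hℓ1
      have e5 : listCost (fun z u => ((1 : ℝ), Gx z u)) ℓ Φ ((τ, e, u0) :: l) (t, x)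
        = τ * ℓ ((t, x) + e) u0 + listCost (fun z u => ((1 : ℝ), Gx z u)) ℓ Φ l
          (t + τ, x + τ • v) := by
        simp [listCost, hv]
      rw [e5]
      linarith [hℓ1.1]

/-- truncated distance to a set -/
def tdist {n : ℕ} (X : Set (Fin n → ℝ)) (x : Fin n → ℝ) : ℝ := min (Metric.infDist x X) 1

lemma tdist_nonneg {n : ℕ} (X : Set (Fin n → ℝ)) (x) : 0 ≤ tdist X x :=
  le_min Metric.infDist_nonneg zero_le_one

lemma tdist_le_one {n : ℕ} (X : Set (Fin n → ℝ)) (x) : tdist X x ≤ 1 := min_le_right _ _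

lemma tdist_continuous {n : ℕ} (X : Set (Fin n → ℝ)) : Continuous (tdist X) :=
  (Metric.continuous_infDist_pt X).min continuous_const

lemma tdist_zero {n : ℕ} {X : Set (Fin n → ℝ)} {x} (hx : x ∈ X) : tdist X x = 0 := by
  simp [tdist, Metric.infDist_zero_of_mem hx]

lemma tdist_lip {n : ℕ} (X : Set (Fin n → ℝ)) (x y) : tdist X x ≤ tdist X y + ‖x - y‖ := by
  have h := Metric.infDist_le_infDist_add_dist (s := X) (x := x) (y := y)
  rw [dist_eq_norm] at h
  have := norm_nonneg (x - y)
  unfold tdist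
  rcases min_choice (Metric.infDist y X) 1 with h1 | h1 <;> rw [h1]
  · exact (min_le_left _ _).trans h
  · exact (min_le_right _ _).trans (by linarith)

lemma tdist_abs {n : ℕ} (X : Set (Fin n → ℝ)) (x y) : |tdist X x - tdist X y| ≤ ‖x - y‖ := by
  rw [abs_le]
  have h1 := tdist_lip X x y
  have h2 := tdist_lip X y x
  rw [norm_sub_rev] at h2
  constructor <;> linarith

lemma mem_of_tdist_zero {n : ℕ} {X : Set (Fin n → ℝ)} (hX : IsClosed X) (hne : X.Nonempty) {x}
    (h : tdist X x ≤ 0) : x ∈ X := by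
  rw [hX.mem_iff_infDist_zero hne]
  unfold tdist at h
  rcases min_le_iff.1 h with h | h
  · exact le_antisymm h Metric.infDist_nonneg
  · linarith

set_option maxHeartbeats 1600000 in
lemma approx_traj {n m : ℕ} (T : ℝ) (hT : 0 < T) (X XT : Set (Fin n → ℝ)) (x₀ : Fin n → ℝ)
    (Gx : ℝ × (Fin n → ℝ) → (Fin m → ℝ) → (Fin n → ℝ))
    (φ : ℝ × (Fin n → ℝ) → (Fin m → ℝ) → ℝ) (Ht : (Fin n → ℝ) → ℝ)
    (hGc : UniformContinuous (fun p : (ℝ × (Fin n → ℝ)) × (Fin m → ℝ) => Gx p.1 p.2))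
    (hφc : UniformContinuous (fun p : (ℝ × (Fin n → ℝ)) × (Fin m → ℝ) => φ p.1 p.2))
    (hHc : UniformContinuous Ht) (M b c : ℝ)
    (hGM : ∀ z u, ‖Gx z u‖ ≤ M) (hφb : ∀ z u, |φ z u| ≤ b) (hHt : ∀ x, |Ht x| ≤ c) (C : ℝ)
    (hdual : ∀ v : ℝ × (Fin n → ℝ) → ℝ, ContDiff ℝ 1 v → ∀ a : ℝ,
      (∀ t ∈ Icc (0 : ℝ) T, ∀ x ∈ X, ∀ u ∈ Ubox m,
        0 ≤ fderiv ℝ v (t, x) ((1 : ℝ), Gx (t, x) u) + φ (t, x) u) →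
      (∀ y ∈ XT, v (T, y) ≤ Ht y + a) → v (0, x₀) ≤ C + a)
    (ε : ℝ) (hε : 0 < ε) :
    ∃ (y : ℝ → Fin n → ℝ) (w : ℝ → Fin m → ℝ), Measurable y ∧ Measurable w ∧
      (∀ s, w s ∈ Ubox m) ∧
      (∀ s ∈ Icc (0 : ℝ) T, ‖y s - x₀ - ∫ r in (0 : ℝ)..s, Gx (r, y r) (w r)‖ ≤ ε) ∧
      (∫ r in (0 : ℝ)..T, φ (r, y r) (w r)) + Ht (y T) ≤ C + ε ∧
      (∫ r in (0 : ℝ)..T, tdist X (y r)) ≤ ε ∧ tdist XT (y T) ≤ ε := by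
  have hM : 0 ≤ M := (norm_nonneg _).trans (hGM 0 0)
  have hb : 0 ≤ b := (abs_nonneg _).trans (hφb 0 0)
  have hc : 0 ≤ c := (abs_nonneg _).trans (hHt 0)
  -- modulus for Ht
  have modH : ∀ e > 0, ∃ d > 0, ∀ p p', ‖p - p'‖ ≤ d → |Ht p - Ht p'| ≤ e := by
    intro e he
    obtain ⟨d, hd, h⟩ := Metric.uniformContinuous_iff.1 hHc e he
    refine ⟨d / 2, by positivity, fun p p' hp => ?_⟩
    have := h (a := p) (b := p') (by rw [dist_eq_norm]; linarith)
    rw [Real.dist_eq] at this; exact this.le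
  have modG : ∀ e > 0, ∃ d > 0, ∀ z z' u, ‖z - z'‖ ≤ d → ‖Gx z u - Gx z' u‖ ≤ e := by
    intro e he
    obtain ⟨d, hd, h⟩ := Metric.uniformContinuous_iff.1 hGc e he
    refine ⟨d / 2, by positivity, fun z z' u hp => ?_⟩
    have := h (a := (z, u)) (b := (z', u)) (by
      rw [Prod.dist_eq, dist_self, dist_eq_norm]; exact max_lt (by linarith) hd)
    rw [dist_eq_norm] at this; exact this.le
  have modφ : ∀ e > 0, ∃ d > 0, ∀ z z' u, ‖z - z'‖ ≤ d → |φ z u - φ z' u| ≤ e := by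
    intro e he
    obtain ⟨d, hd, h⟩ := Metric.uniformContinuous_iff.1 hφc e he
    refine ⟨d / 2, by positivity, fun z z' u hp => ?_⟩
    have := h (a := (z, u)) (b := (z', u)) (by
      rw [Prod.dist_eq, dist_self, dist_eq_norm]; exact max_lt (by linarith) hd)
    rw [Real.dist_eq] at this; exact this.le
  obtain ⟨dH, hdH, hH1⟩ := modH (ε / 8) (by positivity)
  -- the small parameter
  obtain ⟨α, hα0, hα1, hαε, hαH⟩ : ∃ α : ℝ, 0 < α ∧ α ≤ 1 / 3 ∧
      α * (1 + M + b + T) ≤ ε / 40 ∧ α * (1 + M + b + T) ≤ dH / 40 := by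
    have hp : 0 < 1 + M + b + T := by linarith
    refine ⟨min (1 / 3) (min (ε / 40) (dH / 40) / (1 + M + b + T)), by positivity,
      min_le_left _ _, ?_, ?_⟩
    · calc _ ≤ min (ε / 40) (dH / 40) / (1 + M + b + T) * (1 + M + b + T) :=
            mul_le_mul_of_nonneg_right (min_le_right _ _) hp.le
        _ = min (ε / 40) (dH / 40) := by field_simp
        _ ≤ _ := min_le_left _ _
    · calc _ ≤ min (ε / 40) (dH / 40) / (1 + M + b + T) * (1 + M + b + T) :=
            mul_le_mul_of_nonneg_right (min_le_right _ _) hp.le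
        _ = min (ε / 40) (dH / 40) := by field_simp
        _ ≤ _ := min_le_right _ _
  have haM : 0 ≤ α * M := by positivity
  have hab : 0 ≤ α * b := by positivity
  have haT : 0 ≤ α * T := by positivity
  set C1 : ℝ := |C| + 3 + c + (b + 1) * (T + 1) with hC1
  have hC1pos : 0 < C1 := by positivity
  set N : ℝ := C1 / α with hN
  have hNpos : 0 < N := by positivity
  have hNα : N * α = C1 := by rw [hN]; field_simp
  obtain ⟨d1, hd1, hmG⟩ := modG α hα0
  obtain ⟨d2, hd2, hmφ⟩ := modφ (α / 2) (by positivity)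
  obtain ⟨d3, hd3, hmH⟩ := modH α hα0
  obtain ⟨δ, hδ, hδα, hδT, hδ1, hδ2, hδ3, hδN⟩ : ∃ δ : ℝ, 0 < δ ∧ δ ≤ α ∧ δ ≤ T ∧ 2 * δ ≤ d1 ∧
      2 * δ ≤ d2 ∧ δ ≤ d3 ∧ (4 * N + b + 1) * δ ≤ α := by
    have hp : 0 < 4 * N + b + 1 := by positivity
    refine ⟨min α (min T (min (d1 / 2) (min (d2 / 2) (min d3 (α / (4 * N + b + 1)))))),
      by positivity, min_le_left _ _, (min_le_right _ _).trans (min_le_left _ _), ?_, ?_, ?_, ?_⟩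
    · have : min α (min T (min (d1 / 2) (min (d2 / 2) (min d3 (α / (4 * N + b + 1)))))) ≤ d1 / 2 :=
        (min_le_right _ _).trans ((min_le_right _ _).trans (min_le_left _ _))
      linarith
    · have : min α (min T (min (d1 / 2) (min (d2 / 2) (min d3 (α / (4 * N + b + 1)))))) ≤ d2 / 2 :=
        (min_le_right _ _).trans ((min_le_right _ _).trans ((min_le_right _ _).trans
          (min_le_left _ _)))
      linarith
    · exact (min_le_right _ _).trans ((min_le_right _ _).trans ((min_le_right _ _).trans
          ((min_le_right _ _).trans (min_le_left _ _))))
    · have : min α (min T (min (d1 / 2) (min (d2 / 2) (min d3 (α / (4 * N + b + 1))))))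
          ≤ α / (4 * N + b + 1) :=
        (min_le_right _ _).trans ((min_le_right _ _).trans ((min_le_right _ _).trans
          ((min_le_right _ _).trans (min_le_right _ _))))
      rw [le_div_iff₀ hp] at this
      linarith
  have hNδ : 0 ≤ N * δ := by positivity
  have hbδ : 0 ≤ b * δ := by positivity
  set ℓ : ℝ × (Fin n → ℝ) → (Fin m → ℝ) → ℝ := fun z u => φ z u + N * tdist X z.2 with hℓ
  set Φ : ℝ × (Fin n → ℝ) → ℝ :=
    fun z => Ht z.2 + N * tdist XT z.2 + (N + b + 1) * |z.1 - T| with hΦ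
  have hℓc : Continuous (fun p : (ℝ × (Fin n → ℝ)) × (Fin m → ℝ) => ℓ p.1 p.2) :=
    hφc.continuous.add (((tdist_continuous X).comp (continuous_snd.comp continuous_fst)).const_mul N)
  have hΦc : Continuous Φ := by
    refine (hHc.continuous.comp continuous_snd).add (((tdist_continuous XT).comp
      continuous_snd).const_mul N) |>.add ?_
    fun_prop
  obtain ⟨v, hvC, hvs, hvT, hv0⟩ := exists_smooth_subsol
    ((volume : Measure ℝ).prod (volume : Measure (Fin n → ℝ)))
    (Ubox m) (fun z u => ((1 : ℝ), Gx z u)) ℓ Φ δ hδ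
    (fun u _ => continuous_const.prodMk (hGc.continuous.comp (continuous_id.prodMk continuous_const)))
    (fun u _ => hℓc.comp (continuous_id.prodMk continuous_const)) hΦc
    (fun z => -c + b * (z.1 - T)) (by fun_prop)
    (by
      intro z
      simp only [hΦ]
      have h1 := (abs_le.1 (hHt z.2)).1
      have h2 := mul_nonneg hNpos.le (tdist_nonneg XT z.2)
      have h3 := mul_le_mul_of_nonneg_left (le_abs_self (z.1 - T)) hb
      have h4 := mul_nonneg (show 0 ≤ N + 1 by linarith) (abs_nonneg (z.1 - T))
      linarith)
    (by
      intro z e u τ hτ hu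
      simp only [hℓ, Prod.fst_add, Prod.smul_fst, smul_eq_mul, mul_one]
      have h1 := (abs_le.1 (hφb (z + e) u)).1
      have h2 := mul_nonneg hNpos.le (tdist_nonneg X (z + e).2)
      have h3 := mul_nonneg hτ.le (show 0 ≤ φ (z + e) u + N * tdist X (z + e).2 + b by linarith)
      linarith)
  have hv1 : v (0, x₀) ≤ C + 2 * α := by
    refine hdual v hvC (2 * α) ?_ ?_
    · intro t _ x hx u hu
      have := hvs (t, x) u hu
      simpa [hℓ, tdist_zero hx] using this
    · intro y hy
      refine hvT _ _ ?_
      intro p hp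
      have hp1 : |p.1| ≤ δ := (norm_fst_le p).trans hp
      have hp2 : ‖p.2‖ ≤ δ := (norm_snd_le p).trans hp
      simp only [hΦ, Prod.fst_add, Prod.snd_add, add_sub_cancel_left]
      have h1 := (abs_le.1 (hmH (y + p.2) y (by simpa using hp2.trans hδ3))).2
      have h2 := tdist_lip XT (y + p.2) y
      rw [tdist_zero hy, add_sub_cancel_left, zero_add] at h2
      have h3 := mul_le_mul_of_nonneg_left (h2.trans hp2) hNpos.le
      have h4 := mul_le_mul_of_nonneg_left hp1 (show 0 ≤ N + b + 1 by linarith)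
      linarith
  obtain ⟨p, hp, l, hl, hlc⟩ := hv0 (0, x₀) (C + 3 * α) (by linarith)
  have hp1 : |p.1| ≤ δ := (norm_fst_le p).trans hp
  have hp2 : ‖p.2‖ ≤ δ := (norm_snd_le p).trans hp
  set t := p.1 with htdef
  obtain ⟨t', y, w, htt', hym, hwm, hwU, hyt, hres, hcost⟩ := list_to_traj Gx ℓ Φ δ α M (b + N)
    hδ hα0.le hM hGc.continuous hℓc hGM
    (by
      intro z u
      simp only [hℓ, Real.norm_eq_abs]
      refine (abs_add_le _ _).trans ?_
      rw [abs_of_nonneg (mul_nonneg hNpos.le (tdist_nonneg X z.2))]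
      have := mul_le_mul_of_nonneg_left (tdist_le_one X z.2) hNpos.le
      linarith [hφb z u])
    (fun z z' u h => hmG z z' u (h.trans hδ1))
    (by
      intro z z' u h
      simp only [hℓ, Real.norm_eq_abs]
      have h1 := hmφ z z' u (h.trans hδ2)
      have h2 := tdist_abs X z.2 z'.2
      have h3 : ‖z.2 - z'.2‖ ≤ 2 * δ := (norm_snd_le (z - z')).trans h
      have h4 := mul_le_mul_of_nonneg_left (h2.trans h3) hNpos.le
      have e : φ z u + N * tdist X z.2 - (φ z' u + N * tdist X z'.2)
        = (φ z u - φ z' u) + N * (tdist X z.2 - tdist X z'.2) := by ring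
      rw [e]
      refine (abs_add_le _ _).trans ?_
      rw [abs_mul, abs_of_pos hNpos]
      linarith)
    l hl t (x₀ + p.2)
  have hlc' : listCost (fun z u => ((1 : ℝ), Gx z u)) ℓ Φ l (t, x₀ + p.2) < C + 3 * α := by
    have e : ((0, x₀) + p : ℝ × (Fin n → ℝ)) = (t, x₀ + p.2) := by
      ext <;> simp [htdef]
    rwa [e] at hlc
  have hmG' : Measurable (fun r => Gx (r, y r) (w r)) :=
    hGc.continuous.measurable.comp ((measurable_id.prodMk hym).prodMk hwm)
  have hmφ' : Measurable (fun r => φ (r, y r) (w r)) :=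
    hφc.continuous.measurable.comp ((measurable_id.prodMk hym).prodMk hwm)
  have hmq' : Measurable (fun r => tdist X (y r)) := (tdist_continuous X).measurable.comp hym
  have hiG : ∀ a b, IntervalIntegrable (fun r => Gx (r, y r) (w r)) volume a b :=
    intervalIntegrable_of_bdd hmG' (fun s => hGM _ _)
  have hiφ : ∀ a b, IntervalIntegrable (fun r => φ (r, y r) (w r)) volume a b :=
    intervalIntegrable_of_bdd hmφ' (fun s => hφb _ _)
  have hiq : ∀ a b, IntervalIntegrable (fun r => tdist X (y r)) volume a b :=
    intervalIntegrable_of_bdd hmq' (C := 1) (fun s => by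
      rw [Real.norm_of_nonneg (tdist_nonneg _ _)]; exact tdist_le_one _ _)
  have hbG : ∀ a b, ‖∫ r in a..b, Gx (r, y r) (w r)‖ ≤ M * |b - a| := fun a b =>
    intervalIntegral.norm_integral_le_of_norm_le_const fun r _ => hGM _ _
  have hbφ : ∀ a a', |∫ r in a..a', φ (r, y r) (w r)| ≤ b * |a' - a| := fun a a' => by
    rw [← Real.norm_eq_abs]
    exact intervalIntegral.norm_integral_le_of_norm_le_const fun r _ => hφb _ _
  have hbq : ∀ a b, |∫ r in a..b, tdist X (y r)| ≤ 1 * |b - a| := fun a b => by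
    rw [← Real.norm_eq_abs]
    refine intervalIntegral.norm_integral_le_of_norm_le_const fun r _ => ?_
    rw [Real.norm_of_nonneg (tdist_nonneg _ _)]; exact tdist_le_one _ _
  have hsplit : ∫ r in t..t', ℓ (r, y r) (w r)
      = (∫ r in t..t', φ (r, y r) (w r)) + N * ∫ r in t..t', tdist X (y r) := by
    simp only [hℓ]
    rw [intervalIntegral.integral_add (hiφ _ _) ((hiq _ _).const_mul N),
      intervalIntegral.integral_const_mul]
  have hq0 : 0 ≤ ∫ r in t..t', tdist X (y r) :=
    intervalIntegral.integral_nonneg htt' fun r _ => tdist_nonneg _ _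
  set Q := ∫ r in t..t', tdist X (y r) with hQ
  set P := ∫ r in t..t', φ (r, y r) (w r) with hP
  have hPb : -(b * (t' - t)) ≤ P := by
    have := (abs_le.1 (hbφ t t')).1
    rwa [abs_of_nonneg (by linarith)] at this
  set D := |t' - T| with hD
  have hD0 : 0 ≤ D := abs_nonneg _
  have hD1 : t' - T ≤ D := le_abs_self _
  have hD2 : -(t' - T) ≤ D := neg_le_abs _
  have ht1 := (abs_le.1 hp1).1
  have ht2 := (abs_le.1 hp1).2
  rw [hsplit] at hcost
  simp only [hΦ] at hcost
  have hqT0 := tdist_nonneg XT (y t')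
  have hHl := (abs_le.1 (hHt (y t'))).1
  have hCabs := le_abs_self C
  have hlen : t' - t ≤ T + 1 + D := by linarith
  have hmain : N * (Q + tdist XT (y t') + D) ≤ N * α := by
    rw [hNα, hC1]
    have h1 : b * (t' - t) ≤ b * (T + 1 + D) := mul_le_mul_of_nonneg_left hlen hb
    have h2 : α * (t' - t) ≤ 1 * (T + 1 + D) :=
      mul_le_mul (by linarith) hlen (by linarith) zero_le_one
    linarith
  have hsum : Q + tdist XT (y t') + D ≤ α := le_of_mul_le_mul_left hmain hNpos
  have hQα : Q ≤ α := by linarith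
  have hDα : D ≤ α := by linarith
  have hqTα : tdist XT (y t') ≤ α := by linarith
  have hMD : M * D ≤ α * M := by rw [mul_comm α]; exact mul_le_mul_of_nonneg_left hDα hM
  have hMδ : M * δ ≤ α * M := by rw [mul_comm α]; exact mul_le_mul_of_nonneg_left hδα hM
  have hbD : b * D ≤ α * b := by rw [mul_comm α]; exact mul_le_mul_of_nonneg_left hDα hb
  have hbδ' : b * δ ≤ α * b := by rw [mul_comm α]; exact mul_le_mul_of_nonneg_left hδα hb
  have hlenα : α * (t' - t) ≤ α * T + 2 * α := by
    have := mul_le_mul_of_nonneg_left (show t' - t ≤ T + 2 by linarith) hα0.le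
    linarith
  have hTt : t ≤ T := by linarith
  -- distance between y T and y t'
  have hyy : ‖y T - y t'‖ ≤ 2 * (α * T) + 4 * α + 4 * (α * M) := by
    have h1 := hres T hTt
    have h2 := hres t' htt'
    have h3 := hbG t' T
    rw [abs_sub_comm, ← hD] at h3
    have e := intervalIntegral.integral_add_adjacent_intervals (hiG t t') (hiG t' T)
    have e2 : y T - y t' = (y T - (x₀ + p.2) - ∫ r in t..T, Gx (r, y r) (w r))
      - (y t' - (x₀ + p.2) - ∫ r in t..t', Gx (r, y r) (w r))
      + ∫ r in t'..T, Gx (r, y r) (w r) := by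
      rw [← e]; abel
    rw [e2]
    refine (norm_add_le _ _).trans ?_
    have h4 := norm_sub_le (y T - (x₀ + p.2) - ∫ r in t..T, Gx (r, y r) (w r))
      (y t' - (x₀ + p.2) - ∫ r in t..t', Gx (r, y r) (w r))
    have h5 : M * max (T - t') 0 ≤ M * D :=
      mul_le_mul_of_nonneg_left (max_le (by linarith) hD0) hM
    have h6 : α * (T - t) ≤ α * T + α := by
      have := mul_le_mul_of_nonneg_left (show T - t ≤ T + 1 by linarith) hα0.le
      linarith
    simp only [sub_self, max_self, mul_zero, add_zero] at h2
    linarith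
  have hαe : α ≤ ε / 40 := by linarith
  refine ⟨y, w, hym, hwm, hwU, ?_, ?_, ?_, ?_⟩
  · intro s hs
    have hx : ‖p.2‖ ≤ α := hp2.trans hδα
    by_cases hst : s < t
    · have h3 := hbG 0 s
      rw [hyt s hst]
      have e : x₀ + p.2 - x₀ - ∫ r in (0 : ℝ)..s, Gx (r, y r) (w r)
        = p.2 - ∫ r in (0 : ℝ)..s, Gx (r, y r) (w r) := by abel
      rw [e]
      refine (norm_sub_le _ _).trans ?_
      rw [sub_zero, abs_of_nonneg hs.1] at h3
      have : M * s ≤ M * δ := mul_le_mul_of_nonneg_left (by linarith) hM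
      linarith
    · push Not at hst
      have h1 := hres s hst
      have h3 := hbG 0 t
      rw [sub_zero] at h3
      have h3' : M * |t| ≤ M * δ := mul_le_mul_of_nonneg_left hp1 hM
      have e := intervalIntegral.integral_add_adjacent_intervals (hiG 0 t) (hiG t s)
      have e2 : y s - x₀ - ∫ r in (0 : ℝ)..s, Gx (r, y r) (w r)
        = (y s - (x₀ + p.2) - ∫ r in t..s, Gx (r, y r) (w r)) + p.2
          - ∫ r in (0 : ℝ)..t, Gx (r, y r) (w r) := by
        rw [← e]; abel
      rw [e2]
      refine (norm_sub_le _ _).trans ?_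
      have h4 := norm_add_le (y s - (x₀ + p.2) - ∫ r in t..s, Gx (r, y r) (w r)) p.2
      have h5 : M * max (s - t') 0 ≤ M * D :=
        mul_le_mul_of_nonneg_left (max_le (by linarith [hs.2]) hD0) hM
      have h6 : α * (s - t) ≤ α * T + α := by
        have := mul_le_mul_of_nonneg_left (show s - t ≤ T + 1 by linarith [hs.2]) hα0.le
        linarith
      linarith
  · have h1 := (abs_le.1 (hH1 (y T) (y t') (by linarith))).2
    have e1 := intervalIntegral.integral_add_adjacent_intervals (hiφ 0 t) (hiφ t T)
    have e2 := intervalIntegral.integral_add_adjacent_intervals (hiφ t t') (hiφ t' T)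
    have h2 := (abs_le.1 (hbφ 0 t)).2
    have h3 := (abs_le.1 (hbφ t' T)).2
    rw [sub_zero] at h2
    rw [abs_sub_comm, ← hD] at h3
    have h3' : b * |t| ≤ b * δ := mul_le_mul_of_nonneg_left hp1 hb
    have h7 := mul_nonneg hNpos.le hq0
    have h8 := mul_nonneg hNpos.le hqT0
    have h9 := mul_nonneg (show 0 ≤ N + b + 1 by linarith) hD0
    linarith
  · have e1 := intervalIntegral.integral_add_adjacent_intervals (hiq 0 t) (hiq t T)
    have e2 := intervalIntegral.integral_add_adjacent_intervals (hiq t t') (hiq t' T)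
    have h2 := (abs_le.1 (hbq 0 t)).2
    have h3 := (abs_le.1 (hbq t' T)).2
    rw [sub_zero] at h2
    rw [abs_sub_comm, ← hD] at h3
    linarith
  · have := tdist_lip XT (y T) (y t')
    linarith

lemma aa_subseq {E : Type*} [NormedAddCommGroup E] [NormedSpace ℝ E] [FiniteDimensional ℝ E]
    {T : ℝ} (hT : 0 < T) (F : ℕ → ℝ → E) (K : NNReal) (hF : ∀ k, LipschitzWith K (F k))
    (B : ℝ) (hB : ∀ k, ‖F k 0‖ ≤ B) :
    ∃ (σ : ℕ → ℕ) (G : ℝ → E), StrictMono σ ∧ LipschitzWith K G ∧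
      ∀ s ∈ Icc (0 : ℝ) T, Filter.Tendsto (fun k => F (σ k) s) Filter.atTop (nhds (G s)) := by
  haveI : ProperSpace E := FiniteDimensional.proper ℝ E
  let Fb : ℕ → BoundedContinuousFunction (Icc (0 : ℝ) T) E := fun k =>
    BoundedContinuousFunction.mkOfCompact
      ⟨fun s => F k s, (hF k).continuous.comp continuous_subtype_val⟩
  let A : Set (BoundedContinuousFunction (Icc (0 : ℝ) T) E) :=
    {φ | (∀ s t, dist (φ s) (φ t) ≤ K * dist s t) ∧ ∀ s, φ s ∈ Metric.closedBall (0 : E) (B + K * T)}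
  have hev : ∀ s : Icc (0 : ℝ) T,
      Continuous (fun φ : BoundedContinuousFunction (Icc (0 : ℝ) T) E => φ s) := fun s =>
    (BoundedContinuousFunction.lipschitz_eval_const s).continuous
  have hAc : IsClosed A := by
    have : A = (⋂ s, ⋂ t, {φ : BoundedContinuousFunction (Icc (0 : ℝ) T) E |
        dist (φ s) (φ t) ≤ K * dist s t}) ∩
        ⋂ s, {φ | φ s ∈ Metric.closedBall (0 : E) (B + K * T)} := by
      ext φ; simp only [A, mem_inter_iff, mem_iInter, mem_ofPred_eq]
    rw [this]
    refine IsClosed.inter (isClosed_iInter fun s => isClosed_iInter fun t => ?_)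
      (isClosed_iInter fun s => ?_)
    · exact isClosed_le ((hev s).dist (hev t)) continuous_const
    · exact Metric.isClosed_closedBall.preimage (hev s)
  have hAcomp : IsCompact A := by
    refine BoundedContinuousFunction.arzela_ascoli₂ _ (isCompact_closedBall (0 : E) (B + K * T)) A hAc
      (fun φ s h => h.2 s) ?_
    refine UniformEquicontinuous.equicontinuous ?_
    refine LipschitzWith.uniformEquicontinuous _ K fun φ => ?_
    exact LipschitzWith.of_dist_le_mul φ.2.1
  have hFA : ∀ k, Fb k ∈ A := by
    intro k
    refine ⟨fun s t => (hF k).dist_le_mul _ _, fun s => ?_⟩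
    rw [mem_closedBall_zero_iff]
    have h1 := (hF k).dist_le_mul s 0
    rw [dist_eq_norm, Real.dist_eq, sub_zero, abs_of_nonneg s.2.1] at h1
    have h2 : (K : ℝ) * s ≤ K * T := mul_le_mul_of_nonneg_left s.2.2 K.2
    have h3 := norm_le_norm_add_norm_sub' (F k s) (F k 0)
    have h4 := hB k
    change ‖F k s‖ ≤ _
    linarith
  obtain ⟨φ, hφ, σ, hσ, hlim⟩ := hAcomp.tendsto_subseq hFA
  refine ⟨σ, fun s => φ (projIcc 0 T hT.le s), hσ, ?_, ?_⟩
  · have h1 : LipschitzWith K φ := LipschitzWith.of_dist_le_mul hφ.1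
    have h2 := h1.comp (LipschitzWith.projIcc hT.le)
    rw [mul_one] at h2
    exact h2
  · intro s hs
    have h1 := ((hev ⟨s, hs⟩).tendsto φ).comp hlim
    simp only [projIcc_of_mem hT.le hs]
    exact h1

lemma Ubox_norm {m : ℕ} {w : Fin m → ℝ} (h : w ∈ Ubox m) : ‖w‖ ≤ 1 := by
  rw [pi_norm_le_iff_of_nonneg zero_le_one]
  intro i
  rw [Real.norm_eq_abs, abs_le]
  exact ⟨h.1 i, h.2 i⟩

lemma lipschitz_integral {E : Type*} [NormedAddCommGroup E] [NormedSpace ℝ E]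
    [SecondCountableTopology E] [MeasurableSpace E] [BorelSpace E] {q : ℝ → E}
    (hm : Measurable q) (K : NNReal) (hb : ∀ s, ‖q s‖ ≤ K) (c : E) :
    LipschitzWith K (fun t => c + ∫ s in (0 : ℝ)..t, q s) := by
  refine LipschitzWith.of_dist_le_mul fun s t => ?_
  rw [dist_eq_norm, add_sub_add_left_eq_sub, intervalIntegral.integral_interval_sub_left
    (intervalIntegrable_of_bdd hm hb _ _) (intervalIntegrable_of_bdd hm hb _ _), Real.dist_eq]
  exact intervalIntegral.norm_integral_le_of_norm_le_const fun x _ => hb x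

lemma jensen_box {m : ℕ} {w : ℝ → Fin m → ℝ} (hw : Measurable w) (hwU : ∀ s, w s ∈ Ubox m)
    (q : (Fin m → ℝ) → ℝ) (hq : Continuous q) (hc : ConvexOn ℝ (Ubox m) q) {b : ℝ}
    (hqb : ∀ u, |q u| ≤ b) (t τ : ℝ) (hτ : 0 < τ) :
    q (τ⁻¹ • ∫ s in t..(t + τ), w s) ≤ τ⁻¹ * ∫ s in t..(t + τ), q (w s) := by
  have h0 : volume (Ioc t (t + τ)) ≠ 0 := by
    rw [Real.volume_Ioc]; simp [hτ]
  have h1 : volume (Ioc t (t + τ)) ≠ ⊤ := by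
    rw [Real.volume_Ioc]; simp
  have hle : t ≤ t + τ := by linarith
  have I1 := (intervalIntegrable_of_bdd hw (fun s => Ubox_norm (hwU s)) t (t + τ))
  have I2 := (intervalIntegrable_of_bdd (hq.measurable.comp hw) (fun s => hqb (w s)) t (t + τ))
  have := hc.map_set_average_le hq.continuousOn isClosed_Icc h0 h1
    (Filter.Eventually.of_forall hwU)
    ((intervalIntegrable_iff_integrableOn_Ioc_of_le hle).1 I1)
    ((intervalIntegrable_iff_integrableOn_Ioc_of_le hle).1 I2)
  rw [setAverage_eq, setAverage_eq, ← intervalIntegral.integral_of_le hle,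
    ← intervalIntegral.integral_of_le hle] at this
  have hr : volume.real (Ioc t (t + τ)) = τ := by
    simp [Measure.real, Real.volume_Ioc, hτ.le]
  rw [hr] at this
  exact this

lemma lsc_core {n m : ℕ} {T : ℝ} (hT : 0 < T) (y : ℕ → ℝ → Fin n → ℝ) (w : ℕ → ℝ → Fin m → ℝ)
    (x : ℝ → Fin n → ℝ) (u : ℝ → Fin m → ℝ) (W : ℝ → Fin m → ℝ)
    (hy : ∀ k, Measurable (y k)) (hw : ∀ k, Measurable (w k)) (hwU : ∀ k s, w k s ∈ Ubox m)
    (hx : Measurable x) (hu : Measurable u)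
    (hloc : ∀ t ∈ Ioo 0 T, ∀ ε > 0, ∃ δ > 0, ∀ᶠ k in Filter.atTop, ∀ s ∈ Icc t (t + δ),
      ‖y k s - x t‖ ≤ ε)
    (hW : ∀ s ∈ Icc 0 T, Filter.Tendsto (fun k => ∫ r in (0 : ℝ)..s, w k r) Filter.atTop
      (nhds (W s)))
    (hder : ∀ᵐ t, t ∈ Ioo 0 T → HasDerivAt W (u t) t)
    (q : ℝ × (Fin n → ℝ) → (Fin m → ℝ) → ℝ)
    (hq : Continuous (fun p : (ℝ × (Fin n → ℝ)) × (Fin m → ℝ) => q p.1 p.2))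
    (hqc : ∀ z, ConvexOn ℝ (Ubox m) (q z)) (b : ℝ) (hqb : ∀ z u, |q z u| ≤ b)
    (C : ℕ → ℝ) (C₀ : ℝ) (hC : Filter.Tendsto C Filter.atTop (nhds C₀))
    (hIntg : ∀ k, ∫ s in (0 : ℝ)..T, q (s, y k s) (w k s) ≤ C k) :
    ∫ s in (0 : ℝ)..T, q (s, x s) (u s) ≤ C₀ := by
  have hb0 : 0 ≤ b := le_trans (abs_nonneg _) (hqb (0, 0) 0)
  have hmeas : ∀ (y : ℝ → Fin n → ℝ) (w : ℝ → Fin m → ℝ), Measurable y → Measurable w →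
      Measurable (fun s => q (s, y s) (w s)) := fun y w hy hw =>
    hq.measurable.comp ((measurable_id.prodMk hy).prodMk hw)
  obtain ⟨σ, c, hσ, hcl, hclim⟩ := aa_subseq hT
    (fun k t => 0 + ∫ s in (0 : ℝ)..t, q (s, y k s) (w k s)) ⟨b, hb0⟩
    (fun k => lipschitz_integral (hmeas _ _ (hy k) (hw k)) ⟨b, hb0⟩ (fun s => hqb _ _) 0) 0
    (fun k => by simp)
  simp only [zero_add] at hclim
  have hσt := hσ.tendsto_atTop
  have hcT : c T ≤ C₀ :=
    le_of_tendsto_of_tendsto' (hclim T ⟨hT.le, le_rfl⟩) (hC.comp hσt) (fun k => hIntg (σ k))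
  have hc0 : c 0 = 0 := by
    have := hclim 0 ⟨le_rfl, hT.le⟩
    simp only [intervalIntegral.integral_same] at this
    exact (tendsto_nhds_unique this tendsto_const_nhds)
  have hac : AbsolutelyContinuousOnInterval c 0 T :=
    (hcl.lipschitzOnWith).absolutelyContinuousOnInterval
  have hftc := hac.integral_deriv_eq_sub
  have hkey : ∀ t ∈ Ioo 0 T, HasDerivAt W (u t) t → DifferentiableAt ℝ c t →
      q (t, x t) (u t) ≤ deriv c t := by
    intro t ht hWt hct
    refine le_of_forall_pos_le_add fun ε hε => ?_
    -- uniformity over the control box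
    have hunif : ∃ v ∈ nhds (t, x t), ∀ p ∈ v, ∀ a ∈ Ubox m, (q p a, q (t, x t) a) ∈
        {r : ℝ × ℝ | dist r.1 r.2 < ε} := by
      have := IsCompact.mem_uniformity_of_prod (f := q) (s := univ) (k := Ubox m) (q := (t, x t))
        isCompact_Icc hq.continuousOn (mem_univ _) (Metric.dist_mem_uniformity hε)
      rwa [nhdsWithin_univ] at this
    obtain ⟨v, hv, hvq⟩ := hunif
    obtain ⟨δ, hδ, hδv⟩ := Metric.mem_nhds_iff.1 hv
    obtain ⟨δ', hδ', hev⟩ := hloc t ht (δ / 2) (by linarith)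
    have hτev : ∀ᶠ τ in nhdsWithin (0 : ℝ) (Ioi 0),
        q (t, x t) (τ⁻¹ • (W (t + τ) - W t)) ≤ τ⁻¹ • (c (t + τ) - c t) + ε := by
      have hmin : 0 < min (min (δ / 2) δ') (T - t) :=
        lt_min (lt_min (by linarith) hδ') (by linarith [ht.2])
      filter_upwards [Ioo_mem_nhdsGT hmin] with τ hτ
      have hτ0 : 0 < τ := hτ.1
      have hτ1 : τ < δ / 2 := lt_of_lt_of_le hτ.2 ((min_le_left _ _).trans (min_le_left _ _))
      have hτ2 : τ < δ' := lt_of_lt_of_le hτ.2 ((min_le_left _ _).trans (min_le_right _ _))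
      have hτ3 : τ < T - t := lt_of_lt_of_le hτ.2 (min_le_right _ _)
      have htI : t ∈ Icc 0 T := ⟨ht.1.le, ht.2.le⟩
      have htτI : t + τ ∈ Icc 0 T := ⟨by linarith [ht.1], by linarith⟩
      have hl1 : Filter.Tendsto (fun k => q (t, x t) (τ⁻¹ • ((∫ r in (0 : ℝ)..(t + τ), w (σ k) r) -
          ∫ r in (0 : ℝ)..t, w (σ k) r))) Filter.atTop
          (nhds (q (t, x t) (τ⁻¹ • (W (t + τ) - W t)))) := by
        have hcq : Continuous (q (t, x t)) := hq.comp (continuous_const.prodMk continuous_id)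
        refine (hcq.tendsto _).comp ?_
        exact (((hW _ htτI).comp hσt).sub ((hW _ htI).comp hσt)).const_smul _
      have hl2 := (((hclim _ htτI).sub (hclim _ htI)).const_smul τ⁻¹).add_const ε
      refine le_of_tendsto_of_tendsto hl1 hl2 ?_
      filter_upwards [hσt.eventually hev] with k hk
      have Iw := intervalIntegrable_of_bdd (hw (σ k)) (fun s => Ubox_norm (hwU (σ k) s))
      have Iq := intervalIntegrable_of_bdd (hmeas _ _ (hy (σ k)) (hw (σ k)))
        (fun s => hqb (s, y (σ k) s) (w (σ k) s))
      have hcq : Continuous (q (t, x t)) := hq.comp (continuous_const.prodMk continuous_id)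
      have Iq0 := intervalIntegrable_of_bdd (hcq.measurable.comp (hw (σ k)))
        (fun s => hqb (t, x t) (w (σ k) s))
      rw [intervalIntegral.integral_interval_sub_left (Iw _ _) (Iw _ _),
        intervalIntegral.integral_interval_sub_left (Iq _ _) (Iq _ _)]
      refine (jensen_box (hw (σ k)) (hwU (σ k)) _ hcq (hqc _) (hqb _) t τ hτ0).trans ?_
      have hmono : ∫ s in t..(t + τ), q (t, x t) (w (σ k) s) ≤
          ∫ s in t..(t + τ), (q (s, y (σ k) s) (w (σ k) s) + ε) := by
        refine intervalIntegral.integral_mono_on_of_le_Ioo (by linarith) (Iq0 _ _)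
          ((Iq _ _).add intervalIntegrable_const) fun s hs => ?_
        have hp : (s, y (σ k) s) ∈ v := by
          apply hδv
          rw [Metric.mem_ball, Prod.dist_eq, max_lt_iff]
          refine ⟨?_, ?_⟩
          · rw [Real.dist_eq, abs_lt]; constructor <;> linarith [hs.1, hs.2]
          · rw [dist_eq_norm]
            exact (hk s ⟨hs.1.le, by linarith [hs.2]⟩).trans_lt (by linarith)
        have := hvq _ hp _ (hwU (σ k) s)
        simp only [mem_ofPred_eq, Real.dist_eq] at this
        linarith [(abs_lt.1 this).1]
      rw [intervalIntegral.integral_add (Iq _ _) intervalIntegrable_const,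
        intervalIntegral.integral_const, add_sub_cancel_left, smul_eq_mul] at hmono
      have := mul_le_mul_of_nonneg_left hmono (inv_nonneg.2 hτ0.le)
      rw [mul_add, ← mul_assoc, inv_mul_cancel₀ hτ0.ne', one_mul] at this
      exact this
    have hl1 := hWt.tendsto_slope_zero_right
    have hl2 := (hct.hasDerivAt.tendsto_slope_zero_right).add_const ε
    have hcq : Continuous (q (t, x t)) := hq.comp (continuous_const.prodMk continuous_id)
    exact le_of_tendsto_of_tendsto ((hcq.tendsto _).comp hl1) hl2 hτev
  have hdiff := hcl.ae_differentiableAt_real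
  have hle : ∫ s in (0 : ℝ)..T, q (s, x s) (u s) ≤ ∫ s in (0 : ℝ)..T, deriv c s := by
    rw [intervalIntegral.integral_of_le hT.le, intervalIntegral.integral_of_le hT.le,
      integral_Ioc_eq_integral_Ioo, integral_Ioc_eq_integral_Ioo]
    refine integral_mono_ae ?_ ?_ ?_
    · exact ((intervalIntegrable_iff_integrableOn_Ioc_of_le hT.le).1 (intervalIntegrable_of_bdd
        (hmeas x u hx hu) (fun s => hqb _ _) 0 T)).mono_set Ioo_subset_Ioc_self
    · exact ((intervalIntegrable_iff_integrableOn_Ioc_of_le hT.le).1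
        hac.intervalIntegrable_deriv).mono_set Ioo_subset_Ioc_self
    · refine (ae_restrict_iff' measurableSet_Ioo).2 ?_
      filter_upwards [hder, hdiff] with s h1 h2 hs
      exact hkey s hs (h1 hs) h2
  linarith

/-- Coordinatewise clamp to the box `[-R,R]^p`. -/
def clampBox {p : ℕ} (R : ℝ) (v : Fin p → ℝ) : Fin p → ℝ := fun i => max (-R) (min R (v i))

lemma clampBox_lip {p : ℕ} (R : ℝ) : LipschitzWith 1 (clampBox (p := p) R) := by
  refine LipschitzWith.of_dist_le_mul fun v w => ?_
  rw [NNReal.coe_one, one_mul, dist_pi_le_iff dist_nonneg]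
  intro i
  refine le_trans ?_ (dist_le_pi_dist v w i)
  simp only [clampBox, Real.dist_eq]
  refine (abs_max_sub_max_le_max _ _ _ _).trans ?_
  rw [sub_self, abs_zero]
  refine max_le (abs_nonneg _) ((abs_min_sub_min_le_max _ _ _ _).trans ?_)
  rw [sub_self, abs_zero]
  exact max_le (abs_nonneg _) le_rfl

lemma clampBox_eq {p : ℕ} {R : ℝ} {v : Fin p → ℝ} (h : ‖v‖ ≤ R) : clampBox R v = v := by
  funext i
  have := (norm_le_pi_norm v i).trans h
  rw [Real.norm_eq_abs, abs_le] at this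
  simp [clampBox, this.1, this.2]

lemma clampBox_norm {p : ℕ} {R : ℝ} (hR : 0 ≤ R) (v : Fin p → ℝ) : ‖clampBox R v‖ ≤ R := by
  rw [pi_norm_le_iff_of_nonneg hR]
  intro i
  rw [Real.norm_eq_abs, abs_le]
  exact ⟨le_max_left _ _, max_le (by linarith) (min_le_left _ _)⟩

lemma mem_Ubox_of_norm {m : ℕ} {w : Fin m → ℝ} (h : ‖w‖ ≤ 1) : w ∈ Ubox m := by
  constructor <;> intro i
  · have := (norm_le_pi_norm w i).trans h
    rw [Real.norm_eq_abs, abs_le] at this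
    exact this.1
  · have := (norm_le_pi_norm w i).trans h
    rw [Real.norm_eq_abs, abs_le] at this
    exact this.2

lemma limit_traj {n m : ℕ} {T : ℝ} (hT : 0 < T)
    (Gx : ℝ × (Fin n → ℝ) → (Fin m → ℝ) → (Fin n → ℝ))
    (hG : Continuous (fun p : (ℝ × (Fin n → ℝ)) × (Fin m → ℝ) => Gx p.1 p.2))
    (M : ℝ) (hGM : ∀ z u, ‖Gx z u‖ ≤ M)
    (hcvx : ∀ z j, ConvexOn ℝ (Ubox m) (fun u => Gx z u j))
    (hccv : ∀ z j, ConvexOn ℝ (Ubox m) (fun u => - Gx z u j))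
    (x₀ : Fin n → ℝ) (y : ℕ → ℝ → Fin n → ℝ) (w : ℕ → ℝ → Fin m → ℝ)
    (hy : ∀ k, Measurable (y k)) (hw : ∀ k, Measurable (w k)) (hwU : ∀ k s, w k s ∈ Ubox m)
    (e : ℕ → ℝ) (he : Filter.Tendsto e Filter.atTop (nhds 0))
    (hres : ∀ k, ∀ s ∈ Icc (0 : ℝ) T,
      ‖y k s - x₀ - ∫ r in (0 : ℝ)..s, Gx (r, y k r) (w k r)‖ ≤ e k) :
    ∃ (σ : ℕ → ℕ) (x : ℝ → Fin n → ℝ) (u : ℝ → Fin m → ℝ), StrictMono σ ∧ Continuous x ∧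
      Measurable u ∧ (∀ s, u s ∈ Ubox m) ∧
      (∀ t ∈ Icc (0 : ℝ) T, x t = x₀ + ∫ s in (0 : ℝ)..t, Gx (s, x s) (u s)) ∧
      (∀ t ∈ Icc (0 : ℝ) T, Filter.Tendsto (fun k => y (σ k) t) Filter.atTop (nhds (x t))) ∧
      (∀ (q : ℝ × (Fin n → ℝ) → (Fin m → ℝ) → ℝ),
        Continuous (fun p : (ℝ × (Fin n → ℝ)) × (Fin m → ℝ) => q p.1 p.2) →
        (∀ z, ConvexOn ℝ (Ubox m) (q z)) → ∀ b : ℝ, (∀ z u, |q z u| ≤ b) →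
        ∀ (C : ℕ → ℝ) (C₀ : ℝ), Filter.Tendsto C Filter.atTop (nhds C₀) →
        (∀ k, ∫ s in (0 : ℝ)..T, q (s, y (σ k) s) (w (σ k) s) ≤ C k) →
        ∫ s in (0 : ℝ)..T, q (s, x s) (u s) ≤ C₀) := by
  have hM0 : 0 ≤ M := le_trans (norm_nonneg _) (hGM (0, 0) 0)
  have hmeas : ∀ (y : ℝ → Fin n → ℝ) (w : ℝ → Fin m → ℝ), Measurable y → Measurable w →
      Measurable (fun s => Gx (s, y s) (w s)) := fun y w hy hw =>
    hG.measurable.comp ((measurable_id.prodMk hy).prodMk hw)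
  let yt : ℕ → ℝ → Fin n → ℝ := fun k t => x₀ + ∫ s in (0 : ℝ)..t, Gx (s, y k s) (w k s)
  have hytl : ∀ k, LipschitzWith ⟨M, hM0⟩ (yt k) := fun k =>
    lipschitz_integral (hmeas _ _ (hy k) (hw k)) ⟨M, hM0⟩ (fun s => hGM _ _) x₀
  obtain ⟨σ1, x, hσ1, hxl, hxlim⟩ := aa_subseq hT yt ⟨M, hM0⟩ hytl ‖x₀‖
    (fun k => by simp [yt])
  obtain ⟨σ2, W, hσ2, hWl, hWlim⟩ := aa_subseq hT
    (fun k t => 0 + ∫ s in (0 : ℝ)..t, w (σ1 k) s) 1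
    (fun k => lipschitz_integral (hw _) 1 (fun s => Ubox_norm (hwU _ s)) 0) 0 (fun k => by simp)
  simp only [zero_add] at hWlim
  let σ : ℕ → ℕ := fun k => σ1 (σ2 k)
  have hσ : StrictMono σ := hσ1.comp hσ2
  have hσt := hσ.tendsto_atTop
  let u : ℝ → Fin m → ℝ := fun s => clampBox 1 (deriv W s)
  have hu : Measurable u := (clampBox_lip 1).continuous.measurable.comp (measurable_deriv W)
  have huU : ∀ s, u s ∈ Ubox m := fun s => mem_Ubox_of_norm (clampBox_norm zero_le_one _)
  have hder : ∀ᵐ t, HasDerivAt W (u t) t := by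
    filter_upwards [hWl.ae_differentiableAt_real] with t ht
    have h1 : ‖deriv W t‖ ≤ 1 := by
      have := norm_deriv_le_of_lipschitz (x₀ := t) hWl
      simpa using this
    have h2 : u t = deriv W t := clampBox_eq h1
    rw [h2]
    exact ht.hasDerivAt
  have hytσ : ∀ t ∈ Icc (0 : ℝ) T, Filter.Tendsto (fun k => yt (σ k) t) Filter.atTop
      (nhds (x t)) := fun t ht => (hxlim t ht).comp hσ2.tendsto_atTop
  have hyσ : ∀ t ∈ Icc (0 : ℝ) T, Filter.Tendsto (fun k => y (σ k) t) Filter.atTop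
      (nhds (x t)) := by
    intro t ht
    have h1 : Filter.Tendsto (fun k => y (σ k) t - yt (σ k) t) Filter.atTop (nhds 0) := by
      refine squeeze_zero_norm (fun k => ?_) (he.comp hσt)
      have := hres (σ k) t ht
      rwa [sub_sub] at this
    have h2 := h1.add (hytσ t ht)
    simpa using h2
  have hloc : ∀ t ∈ Ioo 0 T, ∀ ε > 0, ∃ δ > 0, ∀ᶠ k in Filter.atTop, ∀ s ∈ Icc t (t + δ),
      ‖y (σ k) s - x t‖ ≤ ε := by
    intro t ht ε hε
    refine ⟨min (T - t) (ε / (3 * (M + 1))), lt_min (by linarith [ht.2]) (by positivity), ?_⟩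
    have h1 : ∀ᶠ k in Filter.atTop, e (σ k) < ε / 3 :=
      (he.comp hσt).eventually_lt_const (by linarith)
    have h2 : ∀ᶠ k in Filter.atTop, dist (yt (σ k) t) (x t) < ε / 3 :=
      Metric.tendsto_nhds.1 (hytσ t ⟨ht.1.le, ht.2.le⟩) _ (by linarith)
    filter_upwards [h1, h2] with k hk1 hk2 s hs
    have hs1 : s - t ≤ T - t := by linarith [hs.2, min_le_left (T - t) (ε / (3 * (M + 1)))]
    have hs2 : s - t ≤ ε / (3 * (M + 1)) := by
      linarith [hs.2, min_le_right (T - t) (ε / (3 * (M + 1)))]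
    have a1 := hres (σ k) s ⟨by linarith [hs.1, ht.1], by linarith⟩
    rw [sub_sub] at a1
    have a2 := (hytl (σ k)).dist_le_mul s t
    rw [Real.dist_eq, abs_of_nonneg (by linarith [hs.1])] at a2
    have a3 : M * (s - t) ≤ ε / 3 := by
      have b1 : M * (s - t) ≤ (M + 1) * (s - t) := by
        have : 0 ≤ s - t := by linarith [hs.1]
        linarith
      have b2 : (M + 1) * (s - t) ≤ (M + 1) * (ε / (3 * (M + 1))) :=
        mul_le_mul_of_nonneg_left hs2 (by linarith)
      have b3 : (M + 1) * (ε / (3 * (M + 1))) = ε / 3 := by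
        have : M + 1 ≠ 0 := by positivity
        field_simp
      linarith
    have a4 := dist_triangle4 (y (σ k) s) (yt (σ k) s) (yt (σ k) t) (x t)
    rw [← dist_eq_norm]
    have a5 : dist (y (σ k) s) (yt (σ k) s) ≤ e (σ k) := by rw [dist_eq_norm]; exact a1
    have a6 : dist (yt (σ k) s) (yt (σ k) t) ≤ M * (s - t) := a2
    linarith
  have hxc := hxl.continuous
  have hlsc : ∀ t, 0 < t → t ≤ T → ∀ (q : ℝ × (Fin n → ℝ) → (Fin m → ℝ) → ℝ),
        Continuous (fun p : (ℝ × (Fin n → ℝ)) × (Fin m → ℝ) => q p.1 p.2) →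
        (∀ z, ConvexOn ℝ (Ubox m) (q z)) → ∀ b : ℝ, (∀ z u, |q z u| ≤ b) →
        ∀ (C : ℕ → ℝ) (C₀ : ℝ), Filter.Tendsto C Filter.atTop (nhds C₀) →
        (∀ k, ∫ s in (0 : ℝ)..t, q (s, y (σ k) s) (w (σ k) s) ≤ C k) →
        ∫ s in (0 : ℝ)..t, q (s, x s) (u s) ≤ C₀ := by
    intro t ht0 htT q hq hqc b hqb C C₀ hC hk
    refine lsc_core ht0 (fun k => y (σ k)) (fun k => w (σ k)) x u W (fun k => hy _)
      (fun k => hw _) (fun k => hwU _) hxc.measurable hu ?_ ?_ ?_ q hq hqc b hqb C C₀ hC hk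
    · intro s hs; exact hloc s ⟨hs.1, hs.2.trans_le htT⟩
    · intro s hs; exact hWlim s ⟨hs.1, hs.2.trans htT⟩
    · filter_upwards [hder] with s hs _ using hs
  refine ⟨σ, x, u, hσ, hxc, hu, huU, ?_, hyσ, ?_⟩
  · intro t ht
    rcases eq_or_lt_of_le ht.1 with h0 | h0
    · subst h0
      have := hytσ 0 ht
      simp only [yt, intervalIntegral.integral_same, add_zero] at this
      rw [intervalIntegral.integral_same, add_zero]
      exact tendsto_nhds_unique this tendsto_const_nhds
    · have hcomp : ∀ (y : ℝ → Fin n → ℝ) (w : ℝ → Fin m → ℝ), Measurable y → Measurable w →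
          ∀ j, (∫ s in (0 : ℝ)..t, Gx (s, y s) (w s)) j = ∫ s in (0 : ℝ)..t, Gx (s, y s) (w s) j := by
        intro y w hy hw j
        exact ((ContinuousLinearMap.proj (R := ℝ) (φ := fun _ : Fin n => ℝ) j).intervalIntegral_comp_comm
          (intervalIntegrable_of_bdd (hmeas y w hy hw) (fun s => hGM _ _) 0 t)).symm
      funext j
      have hlim : Filter.Tendsto (fun k => ∫ s in (0 : ℝ)..t, Gx (s, y (σ k) s) (w (σ k) s) j)
          Filter.atTop (nhds (x t j - x₀ j)) := by
        have := ((tendsto_pi_nhds.1 (hytσ t ht)) j).sub_const (x₀ j)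
        refine this.congr fun k => ?_
        simp only [yt, Pi.add_apply, add_sub_cancel_left]
        exact hcomp _ _ (hy _) (hw _) j
      have hGj : Continuous (fun p : (ℝ × (Fin n → ℝ)) × (Fin m → ℝ) => Gx p.1 p.2 j) :=
        (continuous_apply j).comp hG
      have hGjb : ∀ z u, |Gx z u j| ≤ M := fun z u => (norm_le_pi_norm (Gx z u) j).trans (hGM z u)
      have h1 := hlsc t h0 ht.2 (fun z u => Gx z u j) hGj (fun z => hcvx z j) M hGjb _ _ hlim
        (fun k => le_rfl)
      have h2 := hlsc t h0 ht.2 (fun z u => - Gx z u j) hGj.neg (fun z => hccv z j) M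
        (fun z u => by rw [abs_neg]; exact hGjb z u) _ _ hlim.neg
        (fun k => by rw [intervalIntegral.integral_neg])
      rw [intervalIntegral.integral_neg] at h2
      rw [Pi.add_apply, hcomp _ _ hxc.measurable hu]
      linarith
  · exact hlsc T hT le_rfl

/-- Composition of `Q` with the retraction onto `[0,T] × [-R,R]^n × [-1,1]^m`. -/
def clq {n m : ℕ} {F : Type*} (Q : ℝ × (Fin n → ℝ) × (Fin m → ℝ) → F) (T R : ℝ)
    (z : ℝ × (Fin n → ℝ)) (u : Fin m → ℝ) : F :=
  Q (max 0 (min T z.1), clampBox R z.2, clampBox 1 u)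

lemma clampT_mem {T : ℝ} (hT : 0 < T) (t : ℝ) : max 0 (min T t) ∈ Icc (0 : ℝ) T :=
  ⟨le_max_left _ _, max_le hT.le (min_le_left _ _)⟩

lemma clq_eq {n m : ℕ} {F : Type*} (Q : ℝ × (Fin n → ℝ) × (Fin m → ℝ) → F) {T R : ℝ}
    {t : ℝ} (ht : t ∈ Icc (0 : ℝ) T) {x : Fin n → ℝ} (hx : ‖x‖ ≤ R) {u : Fin m → ℝ}
    (hu : u ∈ Ubox m) : clq Q T R (t, x) u = Q (t, x, u) := by
  simp only [clq, clampBox_eq hx, clampBox_eq (Ubox_norm hu), min_eq_right ht.2, max_eq_right ht.1]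

lemma clq_unif {n m : ℕ} {F : Type*} [NormedAddCommGroup F]
    (Q : ℝ × (Fin n → ℝ) × (Fin m → ℝ) → F) {T R : ℝ} (hT : 0 < T) (hR : 0 ≤ R)
    (hQ : ContinuousOn Q (Icc (0 : ℝ) T ×ˢ (univ : Set ((Fin n → ℝ) × (Fin m → ℝ))))) :
    UniformContinuous (fun p : (ℝ × (Fin n → ℝ)) × (Fin m → ℝ) => clq Q T R p.1 p.2) ∧
    ∃ b, ∀ z u, ‖clq Q T R z u‖ ≤ b := by
  let K : Set (ℝ × (Fin n → ℝ) × (Fin m → ℝ)) :=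
    Icc (0 : ℝ) T ×ˢ Metric.closedBall 0 R ×ˢ Metric.closedBall 0 1
  have hK : IsCompact K :=
    isCompact_Icc.prod ((isCompact_closedBall _ _).prod (isCompact_closedBall _ _))
  have hQK : ContinuousOn Q K := hQ.mono (prod_mono le_rfl (subset_univ _))
  let r : (ℝ × (Fin n → ℝ)) × (Fin m → ℝ) → ℝ × (Fin n → ℝ) × (Fin m → ℝ) := fun p =>
    (max 0 (min T p.1.1), clampBox R p.1.2, clampBox 1 p.2)
  have hrK : ∀ p, r p ∈ K := fun p =>
    ⟨clampT_mem hT _, mem_closedBall_zero_iff.2 (clampBox_norm hR _),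
      mem_closedBall_zero_iff.2 (clampBox_norm zero_le_one _)⟩
  have hru : UniformContinuous r := by
    have h1 : UniformContinuous (fun t : ℝ => max 0 (min T t)) :=
      ((LipschitzWith.id.const_min T).const_max 0).uniformContinuous
    refine UniformContinuous.prodMk ?_ (UniformContinuous.prodMk ?_ ?_)
    · exact h1.comp (uniformContinuous_fst.comp uniformContinuous_fst)
    · exact (clampBox_lip R).uniformContinuous.comp
        (uniformContinuous_snd.comp uniformContinuous_fst)
    · exact (clampBox_lip 1).uniformContinuous.comp uniformContinuous_snd
  refine ⟨?_, ?_⟩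
  · have h1 := hK.uniformContinuousOn_of_continuous hQK
    rw [Metric.uniformContinuous_iff] at hru ⊢
    rw [Metric.uniformContinuousOn_iff] at h1
    intro ε hε
    obtain ⟨δ, hδ, h2⟩ := h1 ε hε
    obtain ⟨δ', hδ', h3⟩ := hru δ hδ
    exact ⟨δ', hδ', fun a b hab => h2 _ (hrK _) _ (hrK _) (h3 hab)⟩
  · obtain ⟨b, hb⟩ := hK.exists_bound_of_continuousOn hQK
    exact ⟨b, fun z u => hb _ (hrK (z, u))⟩

lemma clq_convex {n m : ℕ} (Q : ℝ × (Fin n → ℝ) × (Fin m → ℝ) → ℝ) (T R : ℝ)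
    (hQ : ∀ t x, ConvexOn ℝ univ (fun u : Fin m → ℝ => Q (t, x, u))) (z : ℝ × (Fin n → ℝ)) :
    ConvexOn ℝ (Ubox m) (clq Q T R z) := by
  refine ((hQ (max 0 (min T z.1)) (clampBox R z.2)).subset (subset_univ _)
    (convex_Icc _ _)).congr ?_
  intro u hu
  simp only [clq, clampBox_eq (Ubox_norm hu)]

lemma Fvec_contOn {n m : ℕ} {T : ℝ} {f : ℝ × (Fin n → ℝ) → Fin n → ℝ}
    {g : ℝ × (Fin n → ℝ) → Fin n → Fin m → ℝ}
    (hf : ContinuousOn f (Set.Icc (0 : ℝ) T ×ˢ Set.univ))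
    (hg : ContinuousOn g (Set.Icc (0 : ℝ) T ×ˢ Set.univ)) :
    ContinuousOn (Fvec f g) (Icc (0 : ℝ) T ×ˢ (univ : Set ((Fin n → ℝ) × (Fin m → ℝ)))) := by
  have hp : ContinuousOn (fun z : ℝ × (Fin n → ℝ) × (Fin m → ℝ) => (z.1, z.2.1))
      (Icc (0 : ℝ) T ×ˢ (univ : Set ((Fin n → ℝ) × (Fin m → ℝ)))) := by fun_prop
  have hm : MapsTo (fun z : ℝ × (Fin n → ℝ) × (Fin m → ℝ) => (z.1, z.2.1))
      (Icc (0 : ℝ) T ×ˢ (univ : Set ((Fin n → ℝ) × (Fin m → ℝ)))) (Icc (0 : ℝ) T ×ˢ univ) :=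
    fun z hz => ⟨hz.1, mem_univ _⟩
  have hf' := hf.comp hp hm
  have hg' := hg.comp hp hm
  refine continuousOn_pi.2 fun k => ?_
  refine ContinuousOn.add (continuousOn_pi.1 hf' k) (continuousOn_finsetSum _ fun j _ => ?_)
  exact (continuousOn_pi.1 (continuousOn_pi.1 hg' k) j).mul (by fun_prop)

lemma Fvec_affine_convex {n m : ℕ} (f : ℝ × (Fin n → ℝ) → Fin n → ℝ)
    (g : ℝ × (Fin n → ℝ) → Fin n → Fin m → ℝ) (t : ℝ) (x : Fin n → ℝ) (j : Fin n) :
    ConvexOn ℝ univ (fun u : Fin m → ℝ => Fvec f g (t, x, u) j) ∧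
    ConvexOn ℝ univ (fun u : Fin m → ℝ => - Fvec f g (t, x, u) j) := by
  have key : ∀ (u v : Fin m → ℝ) (a b : ℝ), a + b = 1 →
      Fvec f g (t, x, a • u + b • v) j = a * Fvec f g (t, x, u) j + b * Fvec f g (t, x, v) j := by
    intro u v a b hab
    simp only [Fvec, Pi.add_apply, Pi.smul_apply, smul_eq_mul, mul_add, Finset.sum_add_distrib,
      Finset.mul_sum]
    have h1 : f (t, x) j = a * f (t, x) j + b * f (t, x) j := by rw [← add_mul, hab, one_mul]
    have h2 : ∀ (c : ℝ) (u : Fin m → ℝ), ∑ i, g (t, x) j i * (c * u i) =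
        ∑ i, c * (g (t, x) j i * u i) := fun c u => Finset.sum_congr rfl fun i _ => by ring
    rw [h2, h2]
    linarith
  refine ⟨⟨convex_univ, ?_⟩, ⟨convex_univ, ?_⟩⟩
  · intro u _ v _ a b _ _ hab
    simp only [key u v a b hab, smul_eq_mul, le_refl]
  · intro u _ v _ a b _ _ hab
    simp only [key u v a b hab, smul_eq_mul]
    linarith

lemma limit_adm {n m : ℕ} {T : ℝ} (hT : 0 < T) {X XT : Set (Fin n → ℝ)} (hX : IsCompact X)
    (hXT : IsCompact XT) (hXTne : XT.Nonempty) {x₀ : Fin n → ℝ} (hx₀ : x₀ ∈ X)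
    {f : ℝ × (Fin n → ℝ) → Fin n → ℝ} {g : ℝ × (Fin n → ℝ) → Fin n → Fin m → ℝ}
    (hf : ContinuousOn f (Set.Icc (0 : ℝ) T ×ˢ Set.univ))
    (hg : ContinuousOn g (Set.Icc (0 : ℝ) T ×ˢ Set.univ))
    {R : ℝ} (hR0 : 0 ≤ R) (hR : ∀ x ∈ X, ‖x‖ ≤ R)
    (y : ℕ → ℝ → Fin n → ℝ) (w : ℕ → ℝ → Fin m → ℝ)
    (hy : ∀ k, Measurable (y k)) (hw : ∀ k, Measurable (w k)) (hwU : ∀ k s, w k s ∈ Ubox m)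
    (e : ℕ → ℝ) (he : Filter.Tendsto e Filter.atTop (nhds 0))
    (hres : ∀ k, ∀ s ∈ Icc (0 : ℝ) T,
      ‖y k s - x₀ - ∫ r in (0 : ℝ)..s, clq (Fvec f g) T R (r, y k r) (w k r)‖ ≤ e k)
    (htX : ∀ k, ∫ r in (0 : ℝ)..T, tdist X (y k r) ≤ e k) (htXT : ∀ k, tdist XT (y k T) ≤ e k) :
    ∃ (x : ℝ → Fin n → ℝ) (u : ℝ → Fin m → ℝ), IsAdmissiblePair T X XT x₀ f g x u ∧
      ∀ (q : ℝ × (Fin n → ℝ) × (Fin m → ℝ) → ℝ), Continuous q →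
        (∀ t x, ConvexOn ℝ univ (fun u : Fin m → ℝ => q (t, x, u))) →
        ∀ H : (Fin n → ℝ) → ℝ, Continuous H → ∀ (C : ℕ → ℝ) (C₀ : ℝ),
        Filter.Tendsto C Filter.atTop (nhds C₀) →
        (∀ k, (∫ s in (0 : ℝ)..T, clq q T R (s, y k s) (w k s)) + H (clampBox R (y k T)) ≤ C k) →
        Jcost T q H x u ≤ C₀ := by
  obtain ⟨hGu, M, hGM⟩ := clq_unif (Fvec f g) hT hR0 (Fvec_contOn hf hg)
  obtain ⟨σ, x, u, hσ, hxc, hu, huU, hdyn, hlim, hlsc⟩ := limit_traj hT (clq (Fvec f g) T R)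
    hGu.continuous M hGM
    (fun z j => clq_convex (fun p => Fvec f g p j) T R (fun t x => (Fvec_affine_convex f g t x j).1) z)
    (fun z j => clq_convex (fun p => - Fvec f g p j) T R
      (fun t x => (Fvec_affine_convex f g t x j).2) z) x₀ y w hy hw hwU e he hres
  have heσ := he.comp hσ.tendsto_atTop
  have hTI : T ∈ Icc (0 : ℝ) T := ⟨hT.le, le_rfl⟩
  have hxX : ∀ t ∈ Icc (0 : ℝ) T, x t ∈ X := by
    have h1 : ∫ s in (0 : ℝ)..T, tdist X (x s) ≤ 0 := by
      refine hlsc (fun z _ => tdist X z.2)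
        ((tdist_continuous X).comp (continuous_snd.comp continuous_fst))
        (fun z => convexOn_const _ (convex_Icc _ _)) 1
        (fun z _ => by rw [abs_of_nonneg (tdist_nonneg _ _)]; exact tdist_le_one _ _)
        _ 0 heσ (fun k => htX (σ k))
    have hc : Continuous (fun s => tdist X (x s)) := (tdist_continuous X).comp hxc
    have h2 : ∫ s in Icc (0 : ℝ) T, tdist X (x s) = 0 := by
      rw [integral_Icc_eq_integral_Ioc, ← intervalIntegral.integral_of_le hT.le]
      exact le_antisymm h1 (intervalIntegral.integral_nonneg hT.le fun s _ => tdist_nonneg _ _)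
    rw [integral_eq_zero_iff_of_nonneg (fun s => tdist_nonneg _ _)
      (hc.continuousOn.integrableOn_Icc)] at h2
    have h3 := Measure.eqOn_Icc_of_ae_eq volume hT.ne h2 hc.continuousOn continuousOn_const
    intro t ht
    exact mem_of_tdist_zero hX.isClosed ⟨x₀, hx₀⟩ (h3 ht).le
  have hxT : x T ∈ XT := by
    have h1 := ((tdist_continuous XT).tendsto _).comp (hlim T hTI)
    exact mem_of_tdist_zero hXT.isClosed hXTne
      (le_of_tendsto_of_tendsto' h1 heσ fun k => htXT (σ k))
  have hGm : Measurable (fun s => clq (Fvec f g) T R (s, x s) (u s)) :=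
    hGu.continuous.measurable.comp ((measurable_id.prodMk hxc.measurable).prodMk hu)
  have hGeq : ∀ s ∈ Icc (0 : ℝ) T, clq (Fvec f g) T R (s, x s) (u s) = Fvec f g (s, x s, u s) :=
    fun s hs => clq_eq _ hs (hR _ (hxX s hs)) (huU s)
  refine ⟨x, u, ⟨hu, fun t _ => huU t, ?_, hxT, hxX, ?_, ?_⟩, ?_⟩
  · have := hdyn 0 ⟨le_rfl, hT.le⟩
    simpa using this
  · refine IntegrableOn.congr_fun ?_ hGeq measurableSet_Icc
    rw [integrableOn_Icc_iff_integrableOn_Ioc]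
    exact (intervalIntegrable_iff_integrableOn_Ioc_of_le hT.le).1
      (intervalIntegrable_of_bdd hGm (fun s => hGM _ _) 0 T)
  · intro t ht
    rw [hdyn t ht, intervalIntegral.integral_of_le ht.1, ← integral_Icc_eq_integral_Ioc]
    congr 1
    exact setIntegral_congr_fun measurableSet_Icc fun s hs => hGeq s ⟨hs.1, hs.2.trans ht.2⟩
  · intro q hq hqc H hH C C₀ hC hk
    obtain ⟨hqu, b, hqb⟩ := clq_unif q hT hR0 hq.continuousOn
    have h1 : Filter.Tendsto (fun k => H (clampBox R (y (σ k) T))) Filter.atTop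
        (nhds (H (clampBox R (x T)))) :=
      ((hH.comp (clampBox_lip R).continuous).tendsto _).comp (hlim T hTI)
    rw [clampBox_eq (hR _ (hxX T hTI))] at h1
    have h2 := hlsc (clq q T R) hqu.continuous (clq_convex q T R hqc) b hqb
      (fun k => C (σ k) - H (clampBox R (y (σ k) T))) _ ((hC.comp hσ.tendsto_atTop).sub h1)
      (fun k => by linarith [hk (σ k)])
    have h3 : ∫ s in Icc (0 : ℝ) T, q (s, x s, u s) =
        ∫ s in (0 : ℝ)..T, clq q T R (s, x s) (u s) := by
      rw [intervalIntegral.integral_of_le hT.le, ← integral_Icc_eq_integral_Ioc]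
      exact setIntegral_congr_fun measurableSet_Icc fun s hs =>
        (clq_eq q hs (hR _ (hxX s hs)) (huU s)).symm
    rw [Jcost, h3]
    linarith

lemma LFop_eq {n m : ℕ} (f : ℝ × (Fin n → ℝ) → Fin n → ℝ)
    (g : ℝ × (Fin n → ℝ) → Fin n → Fin m → ℝ)
    (v : ℝ × (Fin n → ℝ) → ℝ) (z : ℝ × (Fin n → ℝ) × (Fin m → ℝ)) :
    LFop f g v z = fderiv ℝ v (z.1, z.2.1) (1, Fvec f g z) := by
  have h : ((1 : ℝ), Fvec f g z) = ((1 : ℝ), (0 : Fin n → ℝ)) +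
      ∑ k, Fvec f g z k • ((0 : ℝ), (Pi.single k (1 : ℝ) : Fin n → ℝ)) := by
    refine Prod.ext ?_ ?_
    · simp [Prod.fst_sum]
    · rw [Prod.snd_add, Prod.snd_sum]
      funext i
      simp [Finset.sum_apply, Pi.single_apply]
  rw [h, map_add, map_sum, LFop]
  congr 1
  refine Finset.sum_congr rfl fun k _ => ?_
  rw [map_smul, smul_eq_mul, mul_comm]

/-- integrability on the compact support of `η` -/
lemma integrable_supp {n m : ℕ} {F : Type*} [NormedAddCommGroup F] [SecondCountableTopology F]
    {T : ℝ} {X : Set (Fin n → ℝ)} (hX : IsCompact X)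
    {η : Measure (ℝ × (Fin n → ℝ) × (Fin m → ℝ))} [IsFiniteMeasure η]
    (hη : η ((Set.Icc (0 : ℝ) T ×ˢ X ×ˢ Ubox m)ᶜ) = 0)
    {q : ℝ × (Fin n → ℝ) × (Fin m → ℝ) → F}
    (hq : ContinuousOn q (Icc (0 : ℝ) T ×ˢ (univ : Set ((Fin n → ℝ) × (Fin m → ℝ))))) :
    Integrable q η := by
  have hK : IsCompact (Set.Icc (0 : ℝ) T ×ˢ X ×ˢ Ubox m) :=
    isCompact_Icc.prod (hX.prod isCompact_Icc)
  have h1 : IntegrableOn q (Set.Icc (0 : ℝ) T ×ˢ X ×ˢ Ubox m) η :=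
    (hq.mono (prod_mono le_rfl (subset_univ _))).integrableOn_compact hK
  rwa [IntegrableOn, Measure.restrict_eq_self_of_ae_mem] at h1
  exact mem_ae_iff.2 hη

lemma exists_traj_le {n m : ℕ} {T : ℝ} (hT : 0 < T) {X XT : Set (Fin n → ℝ)} (hX : IsCompact X)
    (hXT : IsCompact XT) (hXTsub : XT ⊆ X) (hXTne : XT.Nonempty) {x₀ : Fin n → ℝ} (hx₀ : x₀ ∈ X)
    {f : ℝ × (Fin n → ℝ) → Fin n → ℝ} {g : ℝ × (Fin n → ℝ) → Fin n → Fin m → ℝ}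
    (hf : ContinuousOn f (Set.Icc (0 : ℝ) T ×ˢ Set.univ))
    (hg : ContinuousOn g (Set.Icc (0 : ℝ) T ×ˢ Set.univ))
    {h : ℝ × (Fin n → ℝ) × (Fin m → ℝ) → ℝ} {H : (Fin n → ℝ) → ℝ}
    (hh : Continuous h) (hH : Continuous H)
    (hconv : ∀ (t : ℝ) (x : Fin n → ℝ), ConvexOn ℝ univ (fun u : Fin m → ℝ => h (t, x, u)))
    {η : Measure (ℝ × (Fin n → ℝ) × (Fin m → ℝ))} {ηT : Measure (Fin n → ℝ)}
    (hfeas : QFeasible T X XT x₀ f g η ηT) :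
    ∃ (x : ℝ → Fin n → ℝ) (u : ℝ → Fin m → ℝ), IsAdmissiblePair T X XT x₀ f g x u ∧
      Jcost T h H x u ≤ Qcost h H η ηT := by
  obtain ⟨hη1, hη2, hη3, hη4, hL⟩ := hfeas
  obtain ⟨R, hR⟩ := hX.isBounded.exists_norm_le
  have hR0 : 0 ≤ R := (norm_nonneg _).trans (hR x₀ hx₀)
  obtain ⟨hGu, M, hGM⟩ := clq_unif (Fvec f g) hT hR0 (Fvec_contOn hf hg)
  obtain ⟨hqu, b, hqb⟩ := clq_unif h hT hR0 hh.continuousOn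
  have hHu : UniformContinuous (fun x => H (clampBox R x)) ∧ ∃ c, ∀ x, ‖H (clampBox R x)‖ ≤ c := by
    obtain ⟨h1, c, h2⟩ := clq_unif (m := m) (fun z => H z.2.1) hT hR0
      (hH.comp (continuous_fst.comp continuous_snd)).continuousOn
    refine ⟨?_, c, fun x => h2 (0, x) 0⟩
    have h3 : UniformContinuous (fun x : Fin n → ℝ => (((0 : ℝ), x), (0 : Fin m → ℝ))) :=
      (uniformContinuous_const.prodMk uniformContinuous_id).prodMk uniformContinuous_const
    exact h1.comp h3
  obtain ⟨hHu, c, hHc⟩ := hHu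
  have hmass : ηT.real univ = 1 := by
    have := hL (fun _ => 1) contDiff_const
    simp only [LFop_eq, fderiv_fun_const, Pi.zero_apply, zero_apply, integral_zero,
      add_zero, integral_const, smul_eq_mul, mul_one] at this
    exact this.symm
  have hηTae : ∀ᵐ y ∂ηT, y ∈ XT := mem_ae_iff.2 hη4
  have hηae : ∀ᵐ z ∂η, z ∈ Set.Icc (0 : ℝ) T ×ˢ X ×ˢ Ubox m := mem_ae_iff.2 hη3
  have hHT : ∀ {q : (Fin n → ℝ) → ℝ}, Continuous q → Integrable q ηT := by
    intro q hq
    have h1 : IntegrableOn q XT ηT := hq.continuousOn.integrableOn_compact hXT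
    rwa [IntegrableOn, Measure.restrict_eq_self_of_ae_mem hηTae] at h1
  have hdual : ∀ v : ℝ × (Fin n → ℝ) → ℝ, ContDiff ℝ 1 v → ∀ a : ℝ,
      (∀ t ∈ Icc (0 : ℝ) T, ∀ x ∈ X, ∀ u ∈ Ubox m,
        0 ≤ fderiv ℝ v (t, x) (1, clq (Fvec f g) T R (t, x) u) + clq h T R (t, x) u) →
      (∀ y ∈ XT, v (T, y) ≤ H (clampBox R y) + a) → v (0, x₀) ≤ Qcost h H η ηT + a := by
    intro v hv a h1 h2
    have e1 := hL v hv
    have I1 : Integrable (LFop f g v) η := by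
      refine integrable_supp hX hη3 ?_
      have : LFop f g v = fun z => fderiv ℝ v (z.1, z.2.1) (1, Fvec f g z) :=
        funext fun z => LFop_eq f g v z
      rw [this]
      refine ContinuousOn.clm_apply ?_ (continuousOn_const.prodMk (Fvec_contOn hf hg))
      exact ((hv.continuous_fderiv one_ne_zero).comp (by fun_prop :
        Continuous (fun z : ℝ × (Fin n → ℝ) × (Fin m → ℝ) => (z.1, z.2.1)))).continuousOn
    have I2 : Integrable h η := integrable_supp hX hη3 hh.continuousOn
    have e2 : 0 ≤ ∫ z, (LFop f g v z + h z) ∂η := by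
      refine integral_nonneg_of_ae ?_
      filter_upwards [hηae] with z hz
      have := h1 z.1 hz.1 z.2.1 hz.2.1 z.2.2 hz.2.2
      rw [clq_eq _ hz.1 (hR _ hz.2.1) hz.2.2, clq_eq _ hz.1 (hR _ hz.2.1) hz.2.2] at this
      rw [LFop_eq]
      exact this
    rw [integral_add I1 I2] at e2
    have I3 : Integrable (fun y => v (T, y)) ηT :=
      hHT (hv.continuous.comp (continuous_const.prodMk continuous_id))
    have e3 : ∫ y, v (T, y) ∂ηT ≤ ∫ y, (H y + a) ∂ηT := by
      refine integral_mono_ae I3 ((hHT hH).add (integrable_const a)) ?_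
      filter_upwards [hηTae] with y hy
      have := h2 y hy
      rwa [clampBox_eq (hR _ (hXTsub hy))] at this
    rw [integral_add (hHT hH) (integrable_const a), integral_const, hmass, one_smul] at e3
    rw [Qcost]
    linarith
  have happ := fun k : ℕ => approx_traj T hT X XT x₀ (clq (Fvec f g) T R) (clq h T R)
    (fun x => H (clampBox R x)) hGu hqu hHu M b c hGM hqb hHc _ hdual
    (1 / ((k : ℝ) + 1)) (by positivity)
  choose y w hy hw hwU hres hcost htX htXT using happ
  obtain ⟨x, u, hadm, hJ⟩ := limit_adm hT hX hXT hXTne hx₀ hf hg hR0 hR y w hy hw hwU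
    (fun k => 1 / ((k : ℝ) + 1)) tendsto_one_div_add_atTop_nhds_zero_nat hres htX htXT
  refine ⟨x, u, hadm, ?_⟩
  have := hJ h hh hconv H hH (fun k => Qcost h H η ηT + 1 / ((k : ℝ) + 1)) (Qcost h H η ηT + 0)
    (tendsto_one_div_add_atTop_nhds_zero_nat.const_add _) hcost
  simpa using this

lemma adm_regular {n m : ℕ} {T : ℝ} (hT : 0 < T) {X XT : Set (Fin n → ℝ)} {x₀ : Fin n → ℝ}
    {f : ℝ × (Fin n → ℝ) → Fin n → ℝ} {g : ℝ × (Fin n → ℝ) → Fin n → Fin m → ℝ}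
    (hf : ContinuousOn f (Set.Icc (0 : ℝ) T ×ˢ Set.univ))
    (hg : ContinuousOn g (Set.Icc (0 : ℝ) T ×ˢ Set.univ))
    {R : ℝ} (hR0 : 0 ≤ R) (hR : ∀ x ∈ X, ‖x‖ ≤ R)
    {x : ℝ → Fin n → ℝ} {u : ℝ → Fin m → ℝ} (hadm : IsAdmissiblePair T X XT x₀ f g x u) :
    ∃ (y : ℝ → Fin n → ℝ) (w : ℝ → Fin m → ℝ), (∃ K, LipschitzWith K y) ∧ Measurable w ∧
      (∀ s, w s ∈ Ubox m) ∧ (∀ t ∈ Icc (0 : ℝ) T, y t = x t) ∧ (∀ t ∈ Icc (0 : ℝ) T, w t = u t) ∧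
      (∀ t ∈ Icc (0 : ℝ) T, y t = x₀ + ∫ r in (0 : ℝ)..t, clq (Fvec f g) T R (r, y r) (w r)) ∧
      (∀ᵐ t, t ∈ Icc (0 : ℝ) T → HasDerivAt y (Fvec f g (t, y t, w t)) t) := by
  obtain ⟨hu, huU, hx0, hxT, hxX, hIntg, hdyn⟩ := hadm
  obtain ⟨hGu, M, hGM⟩ := clq_unif (Fvec f g) hT hR0 (Fvec_contOn hf hg)
  have hM0 : 0 ≤ M := le_trans (norm_nonneg _) (hGM (0, 0) 0)
  have hxc : ContinuousOn x (Icc 0 T) := by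
    refine ContinuousOn.congr ?_ hdyn
    exact continuousOn_const.add (intervalIntegral.continuousOn_primitive_Icc hIntg)
  let xb : ℝ → Fin n → ℝ := IccExtend hT.le (Set.domRestrict (Icc 0 T) x)
  have hxb : Continuous xb := (continuousOn_iff_continuous_domRestrict.1 hxc).Icc_extend'
  have hxbe : ∀ t ∈ Icc (0 : ℝ) T, xb t = x t := fun t ht => by
    exact IccExtend_of_mem hT.le _ ht
  let w : ℝ → Fin m → ℝ := fun s => clampBox 1 (u s)
  have hw : Measurable w := (clampBox_lip 1).continuous.measurable.comp hu
  have hwU : ∀ s, w s ∈ Ubox m := fun s => mem_Ubox_of_norm (clampBox_norm zero_le_one _)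
  have hwe : ∀ t ∈ Icc (0 : ℝ) T, w t = u t := fun t ht => clampBox_eq (Ubox_norm (huU t ht))
  have hGm : Measurable (fun s => clq (Fvec f g) T R (s, xb s) (w s)) :=
    hGu.continuous.measurable.comp ((measurable_id.prodMk hxb.measurable).prodMk hw)
  let y : ℝ → Fin n → ℝ := fun t => x₀ + ∫ r in (0 : ℝ)..t, clq (Fvec f g) T R (r, xb r) (w r)
  have hyl : LipschitzWith ⟨M, hM0⟩ y := lipschitz_integral hGm ⟨M, hM0⟩ (fun s => hGM _ _) x₀
  have hye : ∀ t ∈ Icc (0 : ℝ) T, y t = x t := by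
    intro t ht
    rw [hdyn t ht]
    simp only [y]
    rw [intervalIntegral.integral_of_le ht.1, ← integral_Icc_eq_integral_Ioc]
    congr 1
    refine setIntegral_congr_fun measurableSet_Icc fun s hs => ?_
    have hs' : s ∈ Icc (0 : ℝ) T := ⟨hs.1, hs.2.trans ht.2⟩
    simp only [hxbe s hs', hwe s hs']
    exact clq_eq _ hs' (hR _ (hxX s hs')) (huU s hs')
  refine ⟨y, w, ⟨_, hyl⟩, hw, hwU, hye, hwe, ?_, ?_⟩
  · intro t ht
    simp only [y]
    congr 1
    refine intervalIntegral.integral_congr fun s hs => ?_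
    rw [uIcc_of_le ht.1] at hs
    have hs' : s ∈ Icc (0 : ℝ) T := ⟨hs.1, hs.2.trans ht.2⟩
    simp only [hxbe s hs']
    rw [← hye s hs']
  · have h1 := (intervalIntegrable_of_bdd hGm (fun s => hGM _ _) 0 T).ae_hasDerivAt_integral
    filter_upwards [h1] with t ht htI
    have h2 := (ht (by rwa [uIcc_of_le hT.le]) 0 left_mem_uIcc).const_add x₀
    have h3 : clq (Fvec f g) T R (t, xb t) (w t) = Fvec f g (t, y t, w t) := by
      rw [hye t htI, hxbe t htI]
      exact clq_eq _ htI (hR _ (hxX t htI)) (hwU t)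
    rw [h3] at h2
    exact h2

lemma occ_feasible {n m : ℕ} {T : ℝ} (hT : 0 < T) {X XT : Set (Fin n → ℝ)} (hX : IsCompact X)
    (hXT : IsCompact XT) {x₀ : Fin n → ℝ} (hx₀ : x₀ ∈ X)
    {f : ℝ × (Fin n → ℝ) → Fin n → ℝ} {g : ℝ × (Fin n → ℝ) → Fin n → Fin m → ℝ}
    (hf : ContinuousOn f (Set.Icc (0 : ℝ) T ×ˢ Set.univ))
    (hg : ContinuousOn g (Set.Icc (0 : ℝ) T ×ˢ Set.univ))
    {h : ℝ × (Fin n → ℝ) × (Fin m → ℝ) → ℝ} {H : (Fin n → ℝ) → ℝ}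
    (hh : Continuous h)
    {x : ℝ → Fin n → ℝ} {u : ℝ → Fin m → ℝ} (hadm : IsAdmissiblePair T X XT x₀ f g x u) :
    Jcost T h H x u ∈ QVals T X XT x₀ f g h H := by
  obtain ⟨R, hR⟩ := hX.isBounded.exists_norm_le
  have hR0 : 0 ≤ R := (norm_nonneg _).trans (hR x₀ hx₀)
  obtain ⟨y, w, ⟨K, hyl⟩, hw, hwU, hye, hwe, hydyn, hder⟩ := adm_regular hT hf hg hR0 hR hadm
  obtain ⟨hu, huU, hx0, hxT, hxX, hIntg, hdyn⟩ := hadm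
  have hTI : T ∈ Icc (0 : ℝ) T := ⟨hT.le, le_rfl⟩
  have h0I : (0 : ℝ) ∈ Icc (0 : ℝ) T := ⟨le_rfl, hT.le⟩
  let γ : ℝ → ℝ × (Fin n → ℝ) × (Fin m → ℝ) := fun t => (t, y t, w t)
  have hγ : Measurable γ := measurable_id.prodMk (hyl.continuous.measurable.prodMk hw)
  let η : Measure (ℝ × (Fin n → ℝ) × (Fin m → ℝ)) := (volume.restrict (Icc (0 : ℝ) T)).map γ
  have hfin : IsFiniteMeasure η := Measure.isFiniteMeasure_map _ _
  have hS : MeasurableSet (Set.Icc (0 : ℝ) T ×ˢ X ×ˢ Ubox m) :=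
    measurableSet_Icc.prod (hX.measurableSet.prod measurableSet_Icc)
  have hsupp : η ((Set.Icc (0 : ℝ) T ×ˢ X ×ˢ Ubox m)ᶜ) = 0 := by
    rw [Measure.map_apply hγ hS.compl, Measure.restrict_apply (hγ hS.compl)]
    convert measure_empty (μ := (volume : Measure ℝ))
    ext t
    simp only [mem_inter_iff, mem_preimage, mem_compl_iff, mem_empty_iff_false, iff_false, not_and,
      γ]
    intro h1 h2
    exact h1 ⟨h2, by rw [hye t h2]; exact hxX t h2, hwU t⟩
  refine ⟨η, Measure.dirac (x T), ⟨hfin, inferInstance, hsupp, ?_, ?_⟩, ?_⟩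
  · rw [Measure.dirac_apply' _ hXT.measurableSet.compl]
    simp [hxT]
  · intro v hv
    have I1 : Integrable (LFop f g v) η := by
      refine integrable_supp hX hsupp ?_
      have : LFop f g v = fun z => fderiv ℝ v (z.1, z.2.1) (1, Fvec f g z) :=
        funext fun z => LFop_eq f g v z
      rw [this]
      refine ContinuousOn.clm_apply ?_ (continuousOn_const.prodMk (Fvec_contOn hf hg))
      exact ((hv.continuous_fderiv one_ne_zero).comp (by fun_prop :
        Continuous (fun z : ℝ × (Fin n → ℝ) × (Fin m → ℝ) => (z.1, z.2.1)))).continuousOn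
    rw [integral_dirac, integral_map hγ.aemeasurable I1.aestronglyMeasurable]
    have hac : AbsolutelyContinuousOnInterval (fun t => v (t, y t)) 0 T := by
      have h1 : LocallyLipschitz (fun t => v (t, y t)) :=
        hv.locallyLipschitz.comp (LipschitzWith.id.prodMk hyl).locallyLipschitz
      obtain ⟨K', hK'⟩ := (h1.locallyLipschitzOn (s := uIcc 0 T)).exists_lipschitzOnWith_of_compact
        isCompact_uIcc
      exact hK'.absolutelyContinuousOnInterval
    have hftc := hac.integral_deriv_eq_sub
    have heq : ∫ t in Icc (0 : ℝ) T, LFop f g v (γ t) = ∫ t in (0 : ℝ)..T, deriv (fun t => v (t, y t)) t := by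
      rw [intervalIntegral.integral_of_le hT.le, ← integral_Icc_eq_integral_Ioc]
      refine setIntegral_congr_ae measurableSet_Icc ?_
      filter_upwards [hder] with t ht htI
      have h1 : HasDerivAt (fun t => (t, y t)) ((1 : ℝ), Fvec f g (t, y t, w t)) t :=
        (hasDerivAt_id t).prodMk (ht htI)
      have h2 := ((hv.differentiable one_ne_zero) (t, y t)).hasFDerivAt.comp_hasDerivAt t h1
      rw [LFop_eq]
      exact h2.deriv.symm
    rw [heq, hftc, hye T hTI, hye 0 h0I, hx0]
    ring
  · rw [Qcost, integral_dirac, integral_map hγ.aemeasurable hh.aestronglyMeasurable, Jcost]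
    congr 1
    refine setIntegral_congr_fun measurableSet_Icc fun t ht => ?_
    simp only [γ, hye t ht, hwe t ht]

lemma key_le {n m : ℕ} {T : ℝ} (hT : 0 < T)
    {X XT : Set (Fin n → ℝ)} (hX : IsCompact X) (hXT : IsCompact XT) (hXTsub : XT ⊆ X)
    {x₀ : Fin n → ℝ} (hx₀ : x₀ ∈ X)
    {f : ℝ × (Fin n → ℝ) → Fin n → ℝ} {g : ℝ × (Fin n → ℝ) → Fin n → Fin m → ℝ}
    (hf : ContinuousOn f (Set.Icc (0 : ℝ) T ×ˢ Set.univ))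
    (hg : ContinuousOn g (Set.Icc (0 : ℝ) T ×ˢ Set.univ))
    {h : ℝ × (Fin n → ℝ) × (Fin m → ℝ) → ℝ} {H : (Fin n → ℝ) → ℝ}
    (hh : Continuous h) (hH : Continuous H)
    {xs : ℝ → Fin n → ℝ} {us : ℝ → Fin m → ℝ}
    (hconv : ∀ (t : ℝ) (x : Fin n → ℝ),
      ConvexOn ℝ Set.univ (fun u : Fin m → ℝ => h (t, x, u)))
    (hopt : IsAdmissiblePair T X XT x₀ f g xs us)
    (hleast : IsLeast (JVals T X XT x₀ f g h H) (Jcost T h H xs us))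
    (huniq : ∀ (x : ℝ → Fin n → ℝ) (u : ℝ → Fin m → ℝ),
      IsAdmissiblePair T X XT x₀ f g x u → Jcost T h H x u = Jcost T h H xs us →
      ∀ᵐ t ∂(volume.restrict (Set.Icc (0 : ℝ) T)), x t = xs t ∧ u t = us t)
    {η : Measure (ℝ × (Fin n → ℝ) × (Fin m → ℝ))} {ηT : Measure (Fin n → ℝ)}
    (hηfeas : QFeasible T X XT x₀ f g η ηT)
    (hηopt : IsLeast (QVals T X XT x₀ f g h H) (Qcost h H η ηT))
    (ψ : ℝ × (Fin n → ℝ) × (Fin m → ℝ) → ℝ) (hψ : Continuous ψ)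
    (hψc : ∀ (t : ℝ) (x : Fin n → ℝ),
      ConvexOn ℝ Set.univ (fun u : Fin m → ℝ => - ψ (t, x, u))) :
    ∫ z, ψ z ∂η ≤ ∫ t in Icc (0 : ℝ) T, ψ (t, xs t, us t) := by
  obtain ⟨R, hR⟩ := hX.isBounded.exists_norm_le
  have hR0 : 0 ≤ R := (norm_nonneg _).trans (hR x₀ hx₀)
  have hXTne : XT.Nonempty := ⟨_, hopt.2.2.2.1⟩
  have hTI : T ∈ Icc (0 : ℝ) T := ⟨hT.le, le_rfl⟩
  have hQJ : Qcost h H η ηT ≤ Jcost T h H xs us :=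
    hηopt.2 (occ_feasible hT hX hXT hx₀ hf hg hh hopt)
  have hfin : IsFiniteMeasure η := hηfeas.1
  let s : ℕ → ℝ := fun k => 1 / ((k : ℝ) + 1)
  have hs0 : ∀ k, 0 < s k := fun k => by positivity
  have hslim : Filter.Tendsto s Filter.atTop (nhds 0) := tendsto_one_div_add_atTop_nhds_zero_nat
  have hex := fun k => exists_traj_le hT hX hXT hXTsub hXTne hx₀ hf hg
    (h := fun z => h z + s k * (- ψ z)) (H := H) (hh.add (continuous_const.mul hψ.neg)) hH
    (fun t x => (hconv t x).add ((hψc t x).smul (hs0 k).le)) hηfeas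
  choose x u hadm hJ using hex
  have hreg := fun k => adm_regular hT hf hg hR0 hR (hadm k)
  choose y w hyl hw hwU hye hwe hydyn _ using hreg
  have hyc : ∀ k, Continuous (y k) := fun k => (hyl k).choose_spec.continuous
  have hyX : ∀ k, ∀ t ∈ Icc (0 : ℝ) T, y k t ∈ X := fun k t ht => by
    rw [hye k t ht]; exact (hadm k).2.2.2.2.1 t ht
  -- transfer of running costs
  have htr : ∀ k (q : ℝ × (Fin n → ℝ) × (Fin m → ℝ) → ℝ), ∀ t ∈ Icc (0 : ℝ) T,
      clq q T R (t, y k t) (w k t) = q (t, x k t, u k t) := by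
    intro k q t ht
    rw [clq_eq q ht (hR _ (hyX k t ht)) (hwU k t), hye k t ht, hwe k t ht]
  have hcq : ∀ k (q : ℝ × (Fin n → ℝ) × (Fin m → ℝ) → ℝ),
      ∫ t in (0 : ℝ)..T, clq q T R (t, y k t) (w k t) = ∫ t in Icc (0 : ℝ) T, q (t, x k t, u k t) := by
    intro k q
    rw [intervalIntegral.integral_of_le hT.le, ← integral_Icc_eq_integral_Ioc]
    exact setIntegral_congr_fun measurableSet_Icc fun t ht => htr k q t ht
  have hIntg : ∀ k (q : ℝ × (Fin n → ℝ) × (Fin m → ℝ) → ℝ), Continuous q →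
      IntegrableOn (fun t => q (t, x k t, u k t)) (Icc (0 : ℝ) T) := by
    intro k q hq
    obtain ⟨hqu, b, hqb⟩ := clq_unif q hT hR0 hq.continuousOn
    refine IntegrableOn.congr_fun ?_ (htr k q) measurableSet_Icc
    rw [integrableOn_Icc_iff_integrableOn_Ioc]
    exact (intervalIntegrable_iff_integrableOn_Ioc_of_le hT.le).1
      (intervalIntegrable_of_bdd (hqu.continuous.measurable.comp
        ((measurable_id.prodMk (hyc k).measurable).prodMk (hw k))) (fun s => hqb _ _) 0 T)
  have hHT : ∀ k (H' : (Fin n → ℝ) → ℝ), H' (clampBox R (y k T)) = H' (x k T) := by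
    intro k H'
    rw [clampBox_eq (hR _ (hyX k T hTI)), hye k T hTI]
  -- splitting the costs
  let Ψ : ℕ → ℝ := fun k => ∫ t in Icc (0 : ℝ) T, ψ (t, x k t, u k t)
  have hJk : ∀ k, Jcost T h H (x k) (u k) - s k * Ψ k ≤ Qcost h H η ηT - s k * ∫ z, ψ z ∂η := by
    intro k
    have h1 := hJ k
    have h2 : Jcost T (fun z => h z + s k * (- ψ z)) H (x k) (u k) =
        Jcost T h H (x k) (u k) - s k * Ψ k := by
      simp only [Jcost, Ψ]
      have I2 : IntegrableOn (fun t => s k * (- ψ (t, x k t, u k t))) (Icc (0 : ℝ) T) :=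
        (hIntg k ψ hψ).neg.const_mul (s k)
      rw [integral_add (hIntg k h hh) I2, integral_const_mul,
        integral_neg]
      ring
    have h3 : Qcost (fun z => h z + s k * (- ψ z)) H η ηT =
        Qcost h H η ηT - s k * ∫ z, ψ z ∂η := by
      simp only [Qcost]
      have I2 : Integrable (fun z => s k * (- ψ z)) η :=
        (integrable_supp hX hηfeas.2.2.1 hψ.continuousOn).neg.const_mul (s k)
      rw [integral_add (integrable_supp hX hηfeas.2.2.1 hh.continuousOn) I2, integral_const_mul,
        integral_neg]
      ring
    rw [h2, h3] at h1
    exact h1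
  have hJge : ∀ k, Jcost T h H xs us ≤ Jcost T h H (x k) (u k) := fun k =>
    hleast.2 ⟨x k, u k, hadm k, rfl⟩
  have hΨge : ∀ k, ∫ z, ψ z ∂η ≤ Ψ k := by
    intro k
    have h1 := hJk k
    have h2 := hJge k
    have h3 : s k * ∫ z, ψ z ∂η ≤ s k * Ψ k := by linarith
    exact le_of_mul_le_mul_left h3 (hs0 k)
  obtain ⟨-, b, hb⟩ := clq_unif ψ hT hR0 hψ.continuousOn
  have hΨle : ∀ k, Ψ k ≤ b * T := by
    intro k
    have h1 := intervalIntegral.norm_integral_le_of_norm_le_const (a := 0) (b := T) (C := b)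
      (f := fun t => clq ψ T R (t, y k t) (w k t)) (fun t _ => hb _ _)
    rw [hcq k ψ, sub_zero, abs_of_pos hT] at h1
    exact (le_abs_self _).trans h1
  obtain ⟨x', u', hadm', hlim⟩ := limit_adm hT hX hXT hXTne hx₀ hf hg hR0 hR y w
    (fun k => (hyc k).measurable) hw hwU (fun _ => 0) tendsto_const_nhds
    (fun k t ht => by
      have : y k t - x₀ - ∫ r in (0 : ℝ)..t, clq (Fvec f g) T R (r, y k r) (w k r) = 0 := by
        rw [sub_sub, sub_eq_zero]; exact hydyn k t ht
      rw [this, norm_zero])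
    (fun k => by
      have : ∫ r in (0 : ℝ)..T, tdist X (y k r) = ∫ r in (0 : ℝ)..T, (0 : ℝ) := by
        refine intervalIntegral.integral_congr fun r hr => ?_
        rw [uIcc_of_le hT.le] at hr
        exact tdist_zero (hyX k r hr)
      rw [this, intervalIntegral.integral_zero])
    (fun k => by
      have : y k T ∈ XT := by rw [hye k T hTI]; exact (hadm k).2.2.2.1
      exact (tdist_zero this).le)
  have hJ' : Jcost T h H x' u' ≤ Jcost T h H xs us := by
    refine hlim h hh hconv H hH (fun k => Jcost T h H xs us + s k * (b * T - ∫ z, ψ z ∂η))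
      (Jcost T h H xs us) ?_ ?_
    · have := (hslim.mul_const (b * T - ∫ z, ψ z ∂η)).const_add (Jcost T h H xs us)
      simpa using this
    · intro k
      rw [hcq, hHT k H]
      have h1 := hJk k
      have h2 : s k * Ψ k ≤ s k * (b * T) := mul_le_mul_of_nonneg_left (hΨle k) (hs0 k).le
      have h3 : Jcost T h H (x k) (u k) =
        (∫ t in Icc (0 : ℝ) T, h (t, x k t, u k t)) + H (x k T) := rfl
      rw [mul_sub]
      linarith
  have hJeq : Jcost T h H x' u' = Jcost T h H xs us :=
    le_antisymm hJ' (hleast.2 ⟨x', u', hadm', rfl⟩)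
  have hae := huniq x' u' hadm' hJeq
  have hfinal := hlim (fun z => - ψ z) hψ.neg hψc (fun _ => 0) continuous_const
    (fun _ => - ∫ z, ψ z ∂η) (- ∫ z, ψ z ∂η) tendsto_const_nhds (fun k => by
      rw [hcq, add_zero, integral_neg]
      exact neg_le_neg (hΨge k))
  rw [Jcost, add_zero, integral_neg, neg_le_neg_iff] at hfinal
  refine hfinal.trans_eq (integral_congr_ae ?_)
  filter_upwards [hae] with t ht
  rw [ht.1, ht.2]

lemma lin_convex {m : ℕ} (c : ℝ) (j : Fin m) :
    ConvexOn ℝ univ (fun u : Fin m → ℝ => c * u j) := by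
  refine ⟨convex_univ, fun u _ v _ a b _ _ _ => le_of_eq ?_⟩
  simp only [Pi.add_apply, Pi.smul_apply, smul_eq_mul]
  ring

theorem Q_optimal_kernel_barycenter
    {n m : ℕ} (hn : 0 < n) (hm : 0 < m) (T : ℝ) (hT : 0 < T)
    (X XT : Set (Fin n → ℝ)) (hX : IsCompact X) (hXT : IsCompact XT) (hXTsub : XT ⊆ X)
    (x₀ : Fin n → ℝ) (hx₀ : x₀ ∈ X)
    (f : ℝ × (Fin n → ℝ) → Fin n → ℝ) (g : ℝ × (Fin n → ℝ) → Fin n → Fin m → ℝ)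
    (hf : ContinuousOn f (Set.Icc (0 : ℝ) T ×ˢ Set.univ))
    (hg : ContinuousOn g (Set.Icc (0 : ℝ) T ×ˢ Set.univ))
    (h : ℝ × (Fin n → ℝ) × (Fin m → ℝ) → ℝ) (H : (Fin n → ℝ) → ℝ)
    (hh : Continuous h) (hH : Continuous H)
    (xs : ℝ → Fin n → ℝ) (us : ℝ → Fin m → ℝ)
    (hconv : ∀ (t : ℝ) (x : Fin n → ℝ),
      ConvexOn ℝ Set.univ (fun u : Fin m → ℝ => h (t, x, u)))
    (hopt : IsAdmissiblePair T X XT x₀ f g xs us)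
    (hleast : IsLeast (JVals T X XT x₀ f g h H) (Jcost T h H xs us))
    (huniq : ∀ (x : ℝ → Fin n → ℝ) (u : ℝ → Fin m → ℝ),
      IsAdmissiblePair T X XT x₀ f g x u → Jcost T h H x u = Jcost T h H xs us →
      ∀ᵐ t ∂(volume.restrict (Set.Icc (0 : ℝ) T)), x t = xs t ∧ u t = us t)
    (η : Measure (ℝ × (Fin n → ℝ) × (Fin m → ℝ))) (ηT : Measure (Fin n → ℝ))
    (hηfeas : QFeasible T X XT x₀ f g η ηT)
    (hηopt : IsLeast (QVals T X XT x₀ f g h H) (Qcost h H η ηT))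
    (ν : Kernel (ℝ × (Fin n → ℝ)) (Fin m → ℝ)) [IsMarkovKernel ν]
    (hdisint : η = Measure.map MeasurableEquiv.prodAssoc
      ((η.map (fun z => (z.1, z.2.1))).compProd ν)) :
    (∀ᵐ z ∂(η.map (fun z => (z.1, z.2.1))),
      (fun k => f z k + ∑ j, g z k j * us z.1 j) =
        ∫ u, Fvec f g (z.1, z.2, u) ∂(ν z)) ∧
    ((∀ j, ∀ᵐ t ∂(volume.restrict (Set.Icc (0 : ℝ) T)), ∃ k, g (t, xs t) k j ≠ 0) →
      ∀ᵐ z ∂(η.map (fun z => (z.1, z.2.1))), us z.1 = ∫ u, u ∂(ν z)) := by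
  have hfin : IsFiniteMeasure η := hηfeas.1
  have hsupp := hηfeas.2.2.1
  have hπ : Measurable (fun z : ℝ × (Fin n → ℝ) × (Fin m → ℝ) => (z.1, z.2.1)) := by fun_prop
  have keyeq : ∀ ψ : ℝ × (Fin n → ℝ) × (Fin m → ℝ) → ℝ, Continuous ψ →
      (∀ t x, ConvexOn ℝ univ (fun u : Fin m → ℝ => ψ (t, x, u))) →
      (∀ t x, ConvexOn ℝ univ (fun u : Fin m → ℝ => - ψ (t, x, u))) →
      ∫ z, ψ z ∂η = ∫ t in Icc (0 : ℝ) T, ψ (t, xs t, us t) := by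
    intro ψ hψ hc1 hc2
    refine le_antisymm (key_le hT hX hXT hXTsub hx₀ hf hg hh hH hconv hopt hleast huniq hηfeas
      hηopt ψ hψ hc2) ?_
    have := key_le hT hX hXT hXTsub hx₀ hf hg hh hH hconv hopt hleast huniq hηfeas
      hηopt (fun z => - ψ z) hψ.neg (fun t x => by simpa only [neg_neg] using hc1 t x)
    rw [integral_neg, integral_neg] at this
    linarith
  obtain ⟨R, hR⟩ := hX.isBounded.exists_norm_le
  have hR0 : 0 ≤ R := (norm_nonneg _).trans (hR x₀ hx₀)
  obtain ⟨y, w, ⟨K, hyl⟩, hw, hwU, hye, hwe, -, -⟩ := adm_regular hT hf hg hR0 hR hopt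
  have hγ : Measurable (fun t : ℝ => (t, y t)) := measurable_id.prodMk hyl.continuous.measurable
  have hμfin : IsFiniteMeasure (η.map (fun z => (z.1, z.2.1))) := Measure.isFiniteMeasure_map _ _
  have hμeq : η.map (fun z => (z.1, z.2.1)) =
      (volume.restrict (Icc (0 : ℝ) T)).map (fun t => (t, y t)) := by
    have hfin2 : IsFiniteMeasure ((volume.restrict (Icc (0 : ℝ) T)).map (fun t => (t, y t))) :=
      Measure.isFiniteMeasure_map _ _
    refine ext_of_forall_integral_eq_of_IsFiniteMeasure fun a => ?_
    rw [integral_map hπ.aemeasurable a.continuous.aestronglyMeasurable,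
      integral_map hγ.aemeasurable a.continuous.aestronglyMeasurable]
    rw [keyeq (fun z => a (z.1, z.2.1)) (by fun_prop) (fun t x => convexOn_const (a (t, x)) convex_univ)
      (fun t x => convexOn_const (- a (t, x)) convex_univ)]
    refine setIntegral_congr_fun measurableSet_Icc fun t ht => ?_
    simp only [hye t ht]
  generalize η.map (fun z => (z.1, z.2.1)) = μ at hdisint hμfin hμeq ⊢
  -- first coordinate lies in the time interval
  have hμI : ∀ᵐ z ∂μ, z.1 ∈ Icc (0 : ℝ) T := by
    rw [hμeq, ae_map_iff hγ.aemeasurable (measurable_fst measurableSet_Icc)]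
    exact ae_restrict_mem measurableSet_Icc
  have hμw : ∀ᵐ z ∂μ, w z.1 = us z.1 := by
    filter_upwards [hμI] with z hz using hwe _ hz
  -- the kernel is concentrated on the box
  have hηU : ∀ᵐ z ∂η, z.2.2 ∈ Ubox m := by
    have : ∀ᵐ z ∂η, z ∈ Set.Icc (0 : ℝ) T ×ˢ X ×ˢ Ubox m := mem_ae_iff.2 hsupp
    filter_upwards [this] with z hz using hz.2.2
  have hcU : ∀ᵐ p ∂(μ.compProd ν), p.2 ∈ Ubox m := by
    rw [hdisint] at hηU
    exact ae_of_ae_map MeasurableEquiv.prodAssoc.measurable.aemeasurable hηU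
  have hνU : ∀ᵐ z ∂μ, ∀ᵐ u ∂(ν z), u ∈ Ubox m := Measure.ae_ae_of_ae_compProd hcU
  have hνint : ∀ᵐ z ∂μ, ∀ j, Integrable (fun u : Fin m → ℝ => u j) (ν z) := by
    filter_upwards [hνU] with z hz j
    refine Integrable.of_bound (measurable_pi_apply j).aestronglyMeasurable 1 ?_
    filter_upwards [hz] with u hu using (norm_le_pi_norm u j).trans (Ubox_norm hu)
  have hcint : ∀ j, Integrable (fun p : (ℝ × (Fin n → ℝ)) × (Fin m → ℝ) => p.2 j)
      (μ.compProd ν) := by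
    intro j
    refine Integrable.of_bound (((measurable_pi_apply j).comp measurable_snd).aestronglyMeasurable) 1 ?_
    filter_upwards [hcU] with p hp using (norm_le_pi_norm p.2 j).trans (Ubox_norm hp)
  have hβint : ∀ j, Integrable (fun z => ∫ u, u j ∂(ν z)) μ := fun j => (hcint j).integral_compProd
  have hwint : ∀ j, Integrable (fun z : ℝ × (Fin n → ℝ) => w z.1 j) μ := by
    intro j
    refine Integrable.of_bound
      (((measurable_pi_apply j).comp (hw.comp measurable_fst)).aestronglyMeasurable) 1 ?_
    exact Filter.Eventually.of_forall fun z => (norm_le_pi_norm (w z.1) j).trans (Ubox_norm (hwU _))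
  have hmain : ∀ j, ∀ᵐ z ∂μ, (∫ u, u j ∂(ν z)) - w z.1 j = 0 := by
    intro j
    refine ae_eq_zero_of_integral_contDiff_smul_eq_zero
      ((hβint j).sub (hwint j)).locallyIntegrable fun a ha hac => ?_
    have hab : ∃ b, ∀ z, ‖a z‖ ≤ b := hac.exists_bound_of_continuous ha.continuous
    obtain ⟨b, hb⟩ := hab
    have hac' := ha.continuous
    have e1 := keyeq (fun z => a (z.1, z.2.1) * z.2.2 j) (by fun_prop)
      (fun t x => lin_convex (a (t, x)) j)
      (fun t x => by simpa only [neg_mul] using lin_convex (- a (t, x)) j)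
    have e2 : ∫ z, a (z.1, z.2.1) * z.2.2 j ∂η = ∫ z, a z * ∫ u, u j ∂(ν z) ∂μ := by
      rw [hdisint, integral_map_equiv]
      have I : Integrable (fun p : (ℝ × (Fin n → ℝ)) × (Fin m → ℝ) => a p.1 * p.2 j)
          (μ.compProd ν) :=
        (hcint j).bdd_mul (hac'.comp continuous_fst).aestronglyMeasurable
          (Filter.Eventually.of_forall fun p => hb p.1)
      refine (Measure.integral_compProd I).trans ?_
      refine integral_congr_ae (Filter.Eventually.of_forall fun z => ?_)
      exact integral_const_mul (a z) (fun u : Fin m → ℝ => u j)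
    have e3 : ∫ z, a z * w z.1 j ∂μ = ∫ t in Icc (0 : ℝ) T, a (t, xs t) * us t j := by
      have hmeas : Measurable (fun z : ℝ × (Fin n → ℝ) => a z * w z.1 j) :=
        hac'.measurable.mul ((measurable_pi_apply j).comp (hw.comp measurable_fst))
      rw [hμeq, integral_map hγ.aemeasurable hmeas.aestronglyMeasurable]
      refine setIntegral_congr_fun measurableSet_Icc fun t ht => ?_
      simp only [hye t ht, hwe t ht]
    have I1 : Integrable (fun z => a z * ∫ u, u j ∂(ν z)) μ :=
      (hβint j).bdd_mul hac'.aestronglyMeasurable (Filter.Eventually.of_forall hb)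
    have I2 : Integrable (fun z => a z * w z.1 j) μ :=
      (hwint j).bdd_mul hac'.aestronglyMeasurable (Filter.Eventually.of_forall hb)
    have e4 : ∫ z, a z • ((∫ u, u j ∂(ν z)) - w z.1 j) ∂μ =
        (∫ z, a z * ∫ u, u j ∂(ν z) ∂μ) - ∫ z, a z * w z.1 j ∂μ := by
      rw [← integral_sub I1 I2]
      refine integral_congr_ae (Filter.Eventually.of_forall fun z => ?_)
      simp only [smul_eq_mul, mul_sub]
    rw [e4, ← e2, e3, e1, sub_self]
  have hall : ∀ᵐ z ∂μ, ∀ j, us z.1 j = ∫ u, u j ∂(ν z) := by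
    filter_upwards [ae_all_iff.2 hmain, hμw] with z hz hz2 j
    rw [← hz2]
    linarith [hz j]
  refine ⟨?_, fun _ => ?_⟩
  · filter_upwards [hall, hνint] with z hz hi
    have hsum : ∀ k, Integrable (fun u : Fin m → ℝ => ∑ j, g z k j * u j) (ν z) := fun k =>
      integrable_finsetSum _ fun j _ => (hi j).const_mul _
    have hF : ∀ k, Integrable (fun u : Fin m → ℝ => Fvec f g (z.1, z.2, u) k) (ν z) := fun k =>
      (integrable_const (f z k)).add (hsum k)
    funext k
    rw [eval_integral hF]
    have : ∫ u, Fvec f g (z.1, z.2, u) k ∂(ν z) = ∫ u, (f z k + ∑ j, g z k j * u j) ∂(ν z) := rfl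
    rw [this, integral_add (integrable_const _) (hsum k), integral_const, probReal_univ, one_smul,
      integral_finsetSum _ (fun j _ => (hi j).const_mul _)]
    congr 1
    refine Finset.sum_congr rfl fun j _ => ?_
    rw [integral_const_mul, hz j]
  · filter_upwards [hall, hνint] with z hz hi
    funext j
    rw [eval_integral hi, hz j]

end
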